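/- arXiv:0909.0692 — 2 statements merged into one kernel-verified Lean document; each statement's English description precedes it below -/
import Mathlib

section
/- (Möbius-invariant Trudinger-Moser inequality) There is a finite constant C such that for every u ∈ H_0^1(B) with ∫_B |∇u|² dx ≤ 1, one has ∫_B (e^{4π u²} - 1) dx/(1-|x|²)² ≤ C. -/
open MeasureTheory Real Filter Set Metric
open scoped Topology RealInnerProductSpace ENNReal

noncomputable section

/-- The open unit disk in `ℂ`. -/
def unitDisk : Set ℂ := {z : ℂ | ‖z‖ < 1}

/-- The Möbius transformation `η_ζ(z) = (z - ζ)/(1 - conj(ζ)·z)`. -/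
def eta (ζ z : ℂ) : ℂ := (z - ζ) / (1 - (starRingEnd ℂ) ζ * z)

/-! ### Möbius transformations of the disk -/

theorem measurableSet_unitDisk : MeasurableSet unitDisk :=
  measurableSet_lt measurable_norm measurable_const

theorem one_sub_conj_mul_ne_zero {ζ z : ℂ} (hζ : ‖ζ‖ < 1) (hz : ‖z‖ ≤ 1) :
    1 - (starRingEnd ℂ) ζ * z ≠ 0 := by
  intro h
  have h1 : (starRingEnd ℂ) ζ * z = 1 := (sub_eq_zero.mp h).symm
  have h2 : ‖ζ‖ * ‖z‖ = 1 := by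
    rw [← RCLike.norm_conj ζ, ← norm_mul, h1, norm_one]
  nlinarith [norm_nonneg ζ, norm_nonneg z]

theorem one_sub_norm_eta_sq {ζ z : ℂ} (hζ : ‖ζ‖ < 1) (hz : ‖z‖ ≤ 1) :
    1 - ‖eta ζ z‖ ^ 2 =
      (1 - ‖ζ‖ ^ 2) * (1 - ‖z‖ ^ 2) / ‖1 - (starRingEnd ℂ) ζ * z‖ ^ 2 := by
  have h := one_sub_conj_mul_ne_zero hζ hz
  have h' : ‖1 - (starRingEnd ℂ) ζ * z‖ ^ 2 ≠ 0 := by simpa using h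
  rw [eta, norm_div, div_pow, eq_div_iff h', sub_mul, div_mul_cancel₀ _ h']
  simp only [Complex.sq_norm, Complex.normSq_apply]
  simp
  ring

theorem norm_eta_lt_one {ζ z : ℂ} (hζ : ‖ζ‖ < 1) (hz : ‖z‖ < 1) : ‖eta ζ z‖ < 1 := by
  have h := one_sub_norm_eta_sq hζ hz.le
  have h' : 0 < ‖1 - (starRingEnd ℂ) ζ * z‖ := norm_pos_iff.mpr (one_sub_conj_mul_ne_zero hζ hz.le)
  have h1 : 0 < 1 - ‖ζ‖ ^ 2 := by nlinarith [norm_nonneg ζ]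
  have h2 : 0 < 1 - ‖z‖ ^ 2 := by nlinarith [norm_nonneg z]
  have : 0 < 1 - ‖eta ζ z‖ ^ 2 := by rw [h]; positivity
  nlinarith [norm_nonneg (eta ζ z)]

theorem norm_eta_eq_one {ζ z : ℂ} (hζ : ‖ζ‖ < 1) (hz : ‖z‖ = 1) : ‖eta ζ z‖ = 1 := by
  have h := one_sub_norm_eta_sq hζ hz.le
  rw [hz] at h
  simp only [one_pow, sub_self, mul_zero, zero_div] at h
  have : ‖eta ζ z‖ ^ 2 = 1 := by linarith
  exact (pow_eq_one_iff_of_nonneg (norm_nonneg _) two_ne_zero).mp this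

theorem norm_eta_comm (ζ z : ℂ) : ‖eta ζ z‖ = ‖eta z ζ‖ := by
  rw [eta, eta, norm_div, norm_div, norm_sub_rev]
  congr 1
  rw [← RCLike.norm_conj]
  simp [mul_comm]

theorem eta_neg_eta {ζ z : ℂ} (hζ : ‖ζ‖ < 1) (hz : ‖z‖ < 1) : eta (-ζ) (eta ζ z) = z := by
  have h := one_sub_conj_mul_ne_zero hζ hz.le
  have h1 := one_sub_conj_mul_ne_zero (ζ := -ζ) (by simpa using hζ) (norm_eta_lt_one hζ hz).le
  rw [eta, div_eq_iff h1]
  rw [eta]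
  simp only [map_neg]
  have h2 : 1 - z * (starRingEnd ℂ) ζ ≠ 0 := by rwa [mul_comm]
  field_simp
  ring

/-- The conformal factor `|η_ζ'(z)|`. -/
def etaFactor (ζ z : ℂ) : ℝ := (1 - ‖ζ‖ ^ 2) / ‖1 - (starRingEnd ℂ) ζ * z‖ ^ 2

theorem hasDerivAt_eta {ζ z : ℂ} (hζ : ‖ζ‖ < 1) (hz : ‖z‖ ≤ 1) :
    HasDerivAt (eta ζ) (((1 - ‖ζ‖ ^ 2 : ℝ) : ℂ) / (1 - (starRingEnd ℂ) ζ * z) ^ 2) z := by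
  have h := one_sub_conj_mul_ne_zero hζ hz
  have h1 : HasDerivAt (fun w : ℂ => w - ζ) 1 z := (hasDerivAt_id z).sub_const ζ
  have h2 : HasDerivAt (fun w : ℂ => 1 - (starRingEnd ℂ) ζ * w) (-((starRingEnd ℂ) ζ)) z := by
    simpa using ((hasDerivAt_id z).const_mul ((starRingEnd ℂ) ζ)).const_sub 1
  have h3 := h1.fun_div h2 h
  refine h3.congr_deriv ?_
  congr 1
  push_cast
  rw [← Complex.conj_mul']
  ring

theorem norm_deriv_eta {ζ z : ℂ} (hζ : ‖ζ‖ < 1) :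
    ‖((1 - ‖ζ‖ ^ 2 : ℝ) : ℂ) / (1 - (starRingEnd ℂ) ζ * z) ^ 2‖ = etaFactor ζ z := by
  have h1 : 0 < 1 - ‖ζ‖ ^ 2 := by nlinarith [norm_nonneg ζ]
  rw [norm_div, norm_pow, Complex.norm_real, Real.norm_of_nonneg h1.le, etaFactor]

theorem etaFactor_eq {ζ z : ℂ} (hζ : ‖ζ‖ < 1) (hz : ‖z‖ < 1) :
    etaFactor ζ z = (1 - ‖eta ζ z‖ ^ 2) / (1 - ‖z‖ ^ 2) := by
  have h2 : 0 < 1 - ‖z‖ ^ 2 := by nlinarith [norm_nonneg z]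
  rw [one_sub_norm_eta_sq hζ hz.le, etaFactor]
  field_simp

theorem etaFactor_neg_eta {ζ z : ℂ} (hζ : ‖ζ‖ < 1) (hz : ‖z‖ < 1) :
    etaFactor (-ζ) (eta ζ z) * etaFactor ζ z = 1 := by
  have h0 := norm_eta_lt_one hζ hz
  rw [etaFactor_eq (by simpa using hζ) h0, eta_neg_eta hζ hz, etaFactor_eq hζ hz]
  have h1 : 0 < 1 - ‖eta ζ z‖ ^ 2 := by nlinarith [norm_nonneg (eta ζ z)]
  have h2 : 0 < 1 - ‖z‖ ^ 2 := by nlinarith [norm_nonneg z]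
  field_simp

theorem image_eta_unitDisk {ζ : ℂ} (hζ : ‖ζ‖ < 1) : eta ζ '' unitDisk = unitDisk := by
  ext z
  constructor
  · rintro ⟨w, hw, rfl⟩
    exact norm_eta_lt_one hζ hw
  · intro hz
    have hζ' : ‖-ζ‖ < 1 := by simpa using hζ
    refine ⟨eta (-ζ) z, norm_eta_lt_one hζ' hz, ?_⟩
    simpa using eta_neg_eta hζ' hz

theorem injOn_eta {ζ : ℂ} (hζ : ‖ζ‖ < 1) : InjOn (eta ζ) unitDisk := by
  intro z hz w hw h
  rw [← eta_neg_eta hζ hz, h, eta_neg_eta hζ hw]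

theorem det_smul_one_complex (c : ℂ) :
    (c • (1 : ℂ →L[ℝ] ℂ)).det = ‖c‖ ^ 2 := by
  have : ((c • (1 : ℂ →L[ℝ] ℂ) : ℂ →L[ℝ] ℂ) : ℂ →ₗ[ℝ] ℂ) = LinearMap.mulLeft ℝ c := by
    ext; simp
  rw [ContinuousLinearMap.det, this, ← Complex.normSq_eq_norm_sq, ← Algebra.norm_complex_apply]
  rfl

/-- Change of variables under a Möbius transformation of the disk. -/
theorem lintegral_unitDisk_eta {ζ : ℂ} (hζ : ‖ζ‖ < 1) (F : ℂ → ℝ≥0∞) :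
    ∫⁻ z in unitDisk, F z =
      ∫⁻ y in unitDisk, ENNReal.ofReal (etaFactor ζ y ^ 2) * F (eta ζ y) := by
  have h := lintegral_image_eq_lintegral_abs_det_fderiv_mul volume measurableSet_unitDisk
    (fun z (hz : ‖z‖ < 1) => (hasDerivAt_eta hζ hz.le).complexToReal_fderiv.hasFDerivWithinAt)
    (injOn_eta hζ) F
  rw [image_eta_unitDisk hζ] at h
  rw [h]
  refine setLIntegral_congr_fun measurableSet_unitDisk fun y _ => ?_
  rw [det_smul_one_complex, norm_deriv_eta hζ, abs_of_nonneg (sq_nonneg _)]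

theorem measurable_eta_uncurry : Measurable (fun p : ℂ × ℂ => eta p.1 p.2) := by
  unfold eta
  have : Measurable (starRingEnd ℂ : ℂ → ℂ) := Complex.continuous_conj.measurable
  fun_prop

/-- Polar coordinates on the disk. -/
theorem lintegral_unitDisk_polar {F : ℂ → ℝ≥0∞} (hF : Measurable F) :
    ∫⁻ z in unitDisk, F z =
      ∫⁻ θ in Ioo (-π) π, ∫⁻ r in Ioo (0 : ℝ) 1,
        ENNReal.ofReal r * F (r * (Real.cos θ + Real.sin θ * Complex.I)) := by
  rw [← lintegral_indicator measurableSet_unitDisk, ← Complex.lintegral_comp_polarCoord_symm,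
    polarCoord_target, Measure.volume_eq_prod, ← Measure.prod_restrict,
    lintegral_prod_symm']
  · refine lintegral_congr fun θ => ?_
    rw [← lintegral_indicator measurableSet_Ioi, ← lintegral_indicator measurableSet_Ioo]
    refine lintegral_congr fun r => ?_
    by_cases hr : 0 < r
    · have hn : ‖Complex.polarCoord.symm (r, θ)‖ = r := by
        rw [Complex.norm_polarCoord_symm, abs_of_pos hr]
      by_cases hr1 : r < 1
      · rw [indicator_of_mem (show r ∈ Ioi 0 from hr), indicator_of_mem (show r ∈ Ioo 0 1 from ⟨hr, hr1⟩),
          indicator_of_mem (show _ ∈ unitDisk from hn.trans_lt hr1), Complex.polarCoord_symm_apply]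
        simp
      · rw [indicator_of_mem (show r ∈ Ioi 0 from hr),
          indicator_of_notMem (show r ∉ Ioo 0 1 from fun h => hr1 h.2),
          indicator_of_notMem (show _ ∉ unitDisk from fun h => hr1 (hn.symm.trans_lt h))]
        simp
    · rw [indicator_of_notMem (show r ∉ Ioi 0 from hr), indicator_of_notMem (fun h => hr h.1)]
  · have h1 : Measurable (Complex.polarCoord.symm : ℝ × ℝ → ℂ) := by
      have : (Complex.polarCoord.symm : ℝ × ℝ → ℂ) =
          fun p => p.1 * (Real.cos p.2 + Real.sin p.2 * Complex.I) := by
        ext p; exact Complex.polarCoord_symm_apply p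
      rw [this]
      fun_prop
    have := (hF.indicator measurableSet_unitDisk).comp h1
    exact (ENNReal.measurable_ofReal.comp measurable_fst).smul this

theorem lintegral_unitDisk_radial {F : ℝ → ℝ≥0∞} (hF : Measurable F) :
    ∫⁻ z in unitDisk, F ‖z‖ =
      ENNReal.ofReal (2 * π) * ∫⁻ r in Ioo (0 : ℝ) 1, ENNReal.ofReal r * F r := by
  rw [lintegral_unitDisk_polar (F := fun z => F ‖z‖) (hF.comp measurable_norm)]
  have h : ∀ θ : ℝ, ∫⁻ r in Ioo (0 : ℝ) 1,
      ENNReal.ofReal r * F ‖(r * (Real.cos θ + Real.sin θ * Complex.I) : ℂ)‖ =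
      ∫⁻ r in Ioo (0 : ℝ) 1, ENNReal.ofReal r * F r := by
    intro θ
    refine setLIntegral_congr_fun measurableSet_Ioo fun r hr => ?_
    have hn : ‖(r * (Real.cos θ + Real.sin θ * Complex.I) : ℂ)‖ = r := by
      rw [← Complex.polarCoord_symm_apply (r, θ), Complex.norm_polarCoord_symm, abs_of_pos hr.1]
    simp only [hn]
  simp only [h, lintegral_const, Measure.restrict_apply MeasurableSet.univ, univ_inter,
    Real.volume_Ioo]
  rw [mul_comm]
  congr 2
  ring

/-! ### The hyperbolic measure -/

/-- The measure `dx/(1-|x|²)²` on the unit disk. -/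
def hyperbolicMeasure : Measure ℂ :=
  (volume.restrict unitDisk).withDensity fun z => ENNReal.ofReal ((1 - ‖z‖ ^ 2) ^ 2)⁻¹

instance : SFinite hyperbolicMeasure := by unfold hyperbolicMeasure; infer_instance

theorem lintegral_hyperbolicMeasure {F : ℂ → ℝ≥0∞} (hF : Measurable F) :
    ∫⁻ z, F z ∂hyperbolicMeasure =
      ∫⁻ z in unitDisk, ENNReal.ofReal ((1 - ‖z‖ ^ 2) ^ 2)⁻¹ * F z := by
  rw [hyperbolicMeasure, lintegral_withDensity_eq_lintegral_mul _ (by fun_prop) hF]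
  rfl

theorem lintegral_hyperbolicMeasure_eta {F : ℝ → ℝ≥0∞} (hF : Measurable F) {ζ : ℂ}
    (hζ : ‖ζ‖ < 1) :
    ∫⁻ z, F ‖eta ζ z‖ ∂hyperbolicMeasure = ∫⁻ z, F ‖z‖ ∂hyperbolicMeasure := by
  have hm : Measurable (eta ζ) := measurable_eta_uncurry.comp measurable_prodMk_left
  rw [lintegral_hyperbolicMeasure (F := fun z => F ‖eta ζ z‖) (hF.comp hm.norm),
    lintegral_hyperbolicMeasure (F := fun z => F ‖z‖) (hF.comp measurable_norm),
    lintegral_unitDisk_eta hζ (fun z => ENNReal.ofReal ((1 - ‖z‖ ^ 2) ^ 2)⁻¹ * F ‖z‖)]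
  refine setLIntegral_congr_fun measurableSet_unitDisk fun z hz => ?_
  have hz : ‖z‖ < 1 := hz
  have h0 := norm_eta_lt_one hζ hz
  have h1 : 0 < 1 - ‖eta ζ z‖ ^ 2 := by nlinarith [norm_nonneg (eta ζ z)]
  have h2 : 0 < 1 - ‖z‖ ^ 2 := by nlinarith [norm_nonneg z]
  simp only [← mul_assoc]
  rw [← ENNReal.ofReal_mul (by positivity), etaFactor_eq hζ hz]
  congr 2
  field_simp

theorem lintegral_hyperbolicMeasure_radial {F : ℝ → ℝ≥0∞} (hF : Measurable F) :
    ∫⁻ z, F ‖z‖ ∂hyperbolicMeasure = ENNReal.ofReal (2 * π) *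
      ∫⁻ r in Ioo (0 : ℝ) 1, ENNReal.ofReal r * (ENNReal.ofReal ((1 - r ^ 2) ^ 2)⁻¹ * F r) := by
  rw [lintegral_hyperbolicMeasure (F := fun z => F ‖z‖) (hF.comp measurable_norm)]
  exact lintegral_unitDisk_radial
    (F := fun r => ENNReal.ofReal ((1 - r ^ 2) ^ 2)⁻¹ * F r) (by fun_prop)

/-- The norm of the hyperbolic gradient of the Green function, as a function of the
pseudo-hyperbolic distance to the pole. -/
def greenKernel (ρ : ℝ) : ℝ := (1 - ρ ^ 2) / (2 * π * ρ)

theorem measurable_greenKernel : Measurable greenKernel := by unfold greenKernel; fun_prop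

theorem greenKernel_nonneg {ρ : ℝ} (h0 : 0 ≤ ρ) (h1 : ρ ≤ 1) : 0 ≤ greenKernel ρ := by
  unfold greenKernel
  have : 0 ≤ 1 - ρ ^ 2 := by nlinarith
  positivity

theorem greenKernel_anti {ρ r : ℝ} (h0 : 0 < r) (h : r ≤ ρ) (h1 : ρ ≤ 1) :
    greenKernel ρ ≤ greenKernel r := by
  unfold greenKernel
  have : 0 ≤ 1 - ρ ^ 2 := by nlinarith
  have : 0 ≤ 1 - r ^ 2 := by nlinarith
  gcongr

theorem greenKernel_le {ρ : ℝ} (h0 : 0 < ρ) : greenKernel ρ ≤ 1 / (2 * π * ρ) := by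
  unfold greenKernel
  gcongr
  nlinarith

theorem lintegral_greenKernel_near {r₀ : ℝ} (h0 : 0 < r₀) (h1 : r₀ ≤ 1 / 2) :
    ∫⁻ z, (Iio r₀).indicator (fun r => ENNReal.ofReal (greenKernel r)) ‖z‖ ∂hyperbolicMeasure ≤
      ENNReal.ofReal (4 / 3 * r₀) := by
  rw [lintegral_hyperbolicMeasure_radial
    (measurable_greenKernel.ennreal_ofReal.indicator measurableSet_Iio)]
  have key : ∫⁻ r in Ioo (0 : ℝ) 1, ENNReal.ofReal r * (ENNReal.ofReal ((1 - r ^ 2) ^ 2)⁻¹ *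
      (Iio r₀).indicator (fun r => ENNReal.ofReal (greenKernel r)) r) ≤
      ∫⁻ r in Ioo (0 : ℝ) r₀, ENNReal.ofReal (4 / 3 / (2 * π)) := by
    rw [← lintegral_indicator measurableSet_Ioo, ← lintegral_indicator measurableSet_Ioo]
    refine lintegral_mono fun r => ?_
    by_cases hr : r ∈ Ioo 0 r₀
    · have hr1 : r ∈ Ioo (0 : ℝ) 1 := ⟨hr.1, by linarith [hr.2]⟩
      have hr0 := hr.1
      have h2 : 3 / 4 ≤ 1 - r ^ 2 := by nlinarith [hr.1, hr.2]
      have h3 : 0 < 1 - r ^ 2 := by linarith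
      simp only [indicator_of_mem hr1, indicator_of_mem (show r ∈ Iio r₀ from hr.2),
        indicator_of_mem hr]
      rw [← ENNReal.ofReal_mul (by positivity), ← ENNReal.ofReal_mul hr1.1.le]
      refine ENNReal.ofReal_le_ofReal ?_
      have : r * (((1 - r ^ 2) ^ 2)⁻¹ * greenKernel r) = 1 / (1 - r ^ 2) / (2 * π) := by
        unfold greenKernel
        field_simp
      rw [this]
      refine div_le_div_of_nonneg_right ?_ (by positivity)
      rw [div_le_div_iff₀ h3 (by norm_num)]
      linarith
    · by_cases hr1 : r ∈ Ioo (0 : ℝ) 1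
      · have : r ∉ Iio r₀ := fun h => hr ⟨hr1.1, h⟩
        simp [indicator_of_notMem this, indicator_of_mem hr1]
      · simp [indicator_of_notMem hr1]
  refine (mul_le_mul_right key _).trans ?_
  rw [lintegral_const, Measure.restrict_apply MeasurableSet.univ, univ_inter, Real.volume_Ioo,
    ← ENNReal.ofReal_mul (by positivity), ← ENNReal.ofReal_mul (by positivity)]
  refine ENNReal.ofReal_le_ofReal (le_of_eq ?_)
  field_simp
  ring

theorem lintegral_greenKernel_sq_annulus {r₀ r₁ : ℝ} (h0 : 0 < r₀) (h01 : r₀ ≤ r₁) :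
    ∫⁻ z, (Ico r₀ r₁).indicator (fun r => ENNReal.ofReal (greenKernel r ^ 2)) ‖z‖
      ∂hyperbolicMeasure ≤ ENNReal.ofReal (1 / (2 * π) * Real.log (r₁ / r₀)) := by
  rw [lintegral_hyperbolicMeasure_radial
    ((measurable_greenKernel.pow_const 2).ennreal_ofReal.indicator measurableSet_Ico)]
  have hint : ∫ r in r₀..r₁, r⁻¹ = Real.log (r₁ / r₀) :=
    integral_inv_of_pos h0 (h0.trans_le h01)
  have key : ∫⁻ r in Ioo (0 : ℝ) 1, ENNReal.ofReal r * (ENNReal.ofReal ((1 - r ^ 2) ^ 2)⁻¹ *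
      (Ico r₀ r₁).indicator (fun r => ENNReal.ofReal (greenKernel r ^ 2)) r) ≤
      ∫⁻ r in Ico r₀ r₁, ENNReal.ofReal (1 / (2 * π) ^ 2) * ENNReal.ofReal r⁻¹ := by
    rw [← lintegral_indicator measurableSet_Ioo, ← lintegral_indicator measurableSet_Ico]
    refine lintegral_mono fun r => ?_
    by_cases hr1 : r ∈ Ioo (0 : ℝ) 1
    · by_cases hr : r ∈ Ico r₀ r₁
      · have hr0 := hr1.1
        have h3 : 0 < 1 - r ^ 2 := by nlinarith [hr1.1, hr1.2]
        simp only [indicator_of_mem hr1, indicator_of_mem hr]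
        rw [← ENNReal.ofReal_mul (by positivity), ← ENNReal.ofReal_mul hr1.1.le,
          ← ENNReal.ofReal_mul (by positivity)]
        refine ENNReal.ofReal_le_ofReal (le_of_eq ?_)
        unfold greenKernel
        field_simp
      · simp [indicator_of_notMem hr]
    · simp [indicator_of_notMem hr1]
  refine (mul_le_mul_right key _).trans ?_
  rw [lintegral_const_mul _ (by fun_prop), restrict_Ico_eq_restrict_Ioc,
    ← ofReal_integral_eq_lintegral_ofReal, ← intervalIntegral.integral_of_le h01, hint,
    ← ENNReal.ofReal_mul (by positivity), ← ENNReal.ofReal_mul (by positivity)]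
  · refine ENNReal.ofReal_le_ofReal (le_of_eq ?_)
    field_simp
  · have : IntervalIntegrable (fun r : ℝ => r⁻¹) volume r₀ r₁ := by
      refine intervalIntegral.intervalIntegrable_inv (fun x hx => ?_) continuousOn_id
      rw [uIcc_of_le h01] at hx
      exact (h0.trans_le hx.1).ne'
    exact this.1
  · filter_upwards [ae_restrict_mem measurableSet_Ioc] with r hr
    exact inv_nonneg.mpr (h0.trans hr.1).le

/-! ### Representation by the Green kernel -/

/-- A function descending from a value `≥ s₂` to a value `≤ s₁` spends enough variation
strictly between the two levels. -/
theorem ofReal_sub_le_lintegral_deriv {g : ℝ → ℝ} (hg : ContDiffOn ℝ 1 g (Icc 0 1)) {s₁ s₂ : ℝ}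
    (h0 : s₂ ≤ |g 0|) (h1 : |g 1| ≤ s₁) :
    ENNReal.ofReal (s₂ - s₁) ≤
      ∫⁻ r in Ioo 0 1, {r | s₁ < |g r| ∧ |g r| < s₂}.indicator (fun r => ‖deriv g r‖ₑ) r := by
  rcases le_or_gt s₂ s₁ with hs | hs
  · simp [ENNReal.ofReal_of_nonpos (sub_nonpos.mpr hs)]
  have hc : ContinuousOn (fun r => |g r|) (Icc 0 1) := hg.continuousOn.abs
  have hcb : IsCompact (Icc 0 1 ∩ (fun r => |g r|) ⁻¹' Iic s₁) :=
    isCompact_Icc.of_isClosed_subset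
      (hc.preimage_isClosed_of_isClosed isClosed_Icc isClosed_Iic) inter_subset_left
  obtain ⟨b, ⟨hb01, hbs⟩, hbmin⟩ := hcb.exists_isLeast ⟨1, ⟨by norm_num, h1⟩⟩
  have hcab : ContinuousOn (fun r => |g r|) (Icc 0 b) :=
    hc.mono (Icc_subset_Icc_right hb01.2)
  have hca : IsCompact (Icc 0 b ∩ (fun r => |g r|) ⁻¹' Ici s₂) :=
    isCompact_Icc.of_isClosed_subset
      (hcab.preimage_isClosed_of_isClosed isClosed_Icc isClosed_Ici) inter_subset_left
  obtain ⟨a, ⟨ha0b, has⟩, hamax⟩ := hca.exists_isGreatest ⟨0, ⟨⟨le_rfl, hb01.1⟩, h0⟩⟩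
  have hbs : |g b| ≤ s₁ := hbs
  have has : s₂ ≤ |g a| := has
  have hmid : ∀ r ∈ Ioo a b, s₁ < |g r| ∧ |g r| < s₂ := by
    intro r hr
    constructor
    · by_contra! h
      exact absurd (hbmin ⟨⟨ha0b.1.trans hr.1.le, hr.2.le.trans hb01.2⟩, h⟩) (not_le.mpr hr.2)
    · by_contra! h
      exact absurd (hamax ⟨⟨ha0b.1.trans hr.1.le, hr.2.le⟩, h⟩) (not_le.mpr hr.1)
  have hsub : Icc a b ⊆ Icc 0 1 := Icc_subset_Icc ha0b.1 hb01.2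
  calc ENNReal.ofReal (s₂ - s₁) ≤ ‖g b - g a‖ₑ := by
        rw [Real.enorm_eq_ofReal_abs]
        refine ENNReal.ofReal_le_ofReal ?_
        have := abs_sub_abs_le_abs_sub (g a) (g b)
        rw [abs_sub_comm] at this
        linarith
    _ ≤ ∫⁻ r in Icc a b, ‖deriv g r‖ₑ :=
        enorm_sub_le_lintegral_deriv_of_contDiffOn_Icc (hg.mono hsub) ha0b.2
    _ = ∫⁻ r in Ioo a b, ‖deriv g r‖ₑ := by rw [restrict_Ioo_eq_restrict_Icc]
    _ = ∫⁻ r in Ioo a b, {r | s₁ < |g r| ∧ |g r| < s₂}.indicator (fun r => ‖deriv g r‖ₑ) r :=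
        setLIntegral_congr_fun measurableSet_Ioo fun r hr =>
          (indicator_of_mem (s := {r | s₁ < |g r| ∧ |g r| < s₂}) (hmid r hr)
            (fun r => ‖deriv g r‖ₑ)).symm
    _ ≤ _ := lintegral_mono_set (Ioo_subset_Ioo ha0b.1 hb01.2)

theorem contDiffOn_eta_ray {ζ : ℂ} (hζ : ‖ζ‖ < 1) {ω : ℂ} (hω : ‖ω‖ = 1) :
    ContDiffOn ℝ 1 (fun r : ℝ => eta ζ (r * ω)) (Icc 0 1) := by
  have h1 : ContDiff ℝ 1 (fun r : ℝ => (r : ℂ) * ω) :=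
    Complex.ofRealCLM.contDiff.mul contDiff_const
  have h2 : ContDiff ℝ 1 (fun r : ℝ => 1 - (starRingEnd ℂ) ζ * ((r : ℂ) * ω)) :=
    contDiff_const.sub (contDiff_const.mul h1)
  unfold eta
  simp only [div_eq_mul_inv]
  refine (h1.sub contDiff_const).contDiffOn.mul (h2.contDiffOn.inv fun r hr => ?_)
  refine one_sub_conj_mul_ne_zero hζ ?_
  rw [norm_mul, hω, mul_one, Complex.norm_real, Real.norm_of_nonneg hr.1]
  exact hr.2

theorem norm_cos_add_sin_mul_I (θ : ℝ) : ‖(Real.cos θ + Real.sin θ * Complex.I : ℂ)‖ = 1 := by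
  rw [Complex.ofReal_cos, Complex.ofReal_sin, ← Complex.exp_mul_I, Complex.norm_exp_ofReal_mul_I]

section LevelSets

variable {u : ℂ → ℝ}

/-- The oscillation between two levels along a hyperbolic geodesic ray issuing from `x`. -/
theorem ofReal_sub_le_lintegral_ray (hu : ContDiff ℝ 1 u) (h0 : ∀ z, 1 ≤ ‖z‖ → u z = 0) {x : ℂ}
    (hx : ‖x‖ < 1) {s₁ s₂ : ℝ} (hs₁ : 0 ≤ s₁) (hs₂ : s₂ ≤ |u x|) {ω : ℂ} (hω : ‖ω‖ = 1) :
    ENNReal.ofReal (s₂ - s₁) ≤ ∫⁻ r : ℝ in Ioo 0 1, {y | s₁ < |u y| ∧ |u y| < s₂}.indicator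
      (fun y => ENNReal.ofReal ‖fderiv ℝ u y‖) (eta (-x) (r * ω)) *
        ENNReal.ofReal (etaFactor (-x) (r * ω)) := by
  have hx' : ‖-x‖ < 1 := by simpa using hx
  have hg : ContDiffOn ℝ 1 (fun r : ℝ => u (eta (-x) (r * ω))) (Icc 0 1) :=
    hu.comp_contDiffOn (contDiffOn_eta_ray hx' hω)
  have hg0 : s₂ ≤ |u (eta (-x) ((0 : ℝ) * ω))| := by simpa [eta] using hs₂
  have hg1 : |u (eta (-x) ((1 : ℝ) * ω))| ≤ s₁ := by
    rw [h0 _ (norm_eta_eq_one hx' (by simpa using hω)).ge]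
    simpa using hs₁
  refine (ofReal_sub_le_lintegral_deriv hg hg0 hg1).trans ?_
  refine setLIntegral_mono' measurableSet_Ioo fun r hr => ?_
  by_cases hA : s₁ < |u (eta (-x) (r * ω))| ∧ |u (eta (-x) (r * ω))| < s₂
  · rw [indicator_of_mem (show r ∈ {r : ℝ | s₁ < |u (eta (-x) (r * ω))| ∧
      |u (eta (-x) (r * ω))| < s₂} from hA), indicator_of_mem (show eta (-x) (r * ω) ∈ {y |
      s₁ < |u y| ∧ |u y| < s₂} from hA), ← ENNReal.ofReal_mul (norm_nonneg _),
      ← ofReal_norm]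
    refine ENNReal.ofReal_le_ofReal ?_
    have hn : ‖(r : ℂ) * ω‖ ≤ 1 := by
      rw [norm_mul, hω, mul_one, Complex.norm_real, Real.norm_of_nonneg hr.1.le]
      exact hr.2.le
    have hd1 : HasDerivAt (fun r : ℝ => (r : ℂ) * ω) ω r := by
      simpa using (Complex.ofRealCLM.hasDerivAt (x := r)).mul_const ω
    have hd2 := (hasDerivAt_eta hx' hn).complexToReal_fderiv.comp_hasDerivAt r hd1
    have hd3 := ((hu.differentiable one_ne_zero) (eta (-x) (r * ω))).hasFDerivAt.comp_hasDerivAt r hd2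
    have hd4 : deriv (fun r : ℝ => u (eta (-x) (r * ω))) r = _ := hd3.deriv
    rw [hd4]
    refine (ContinuousLinearMap.le_opNorm _ _).trans ?_
    refine mul_le_mul_of_nonneg_left (le_of_eq ?_) (norm_nonneg _)
    rw [← norm_deriv_eta hx', smul_apply, norm_smul]
    simp [hω]
  · rw [indicator_of_notMem (show r ∉ {r : ℝ | s₁ < |u (eta (-x) (r * ω))| ∧
      |u (eta (-x) (r * ω))| < s₂} from hA)]
    exact zero_le

theorem measurableSet_level (hu : Continuous u) (s₁ s₂ : ℝ) :
    MeasurableSet {y | s₁ < |u y| ∧ |u y| < s₂} :=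
  ((isOpen_lt continuous_const hu.abs).inter (isOpen_lt hu.abs continuous_const)).measurableSet

theorem measurable_etaFactor (ζ : ℂ) : Measurable (etaFactor ζ) := by
  unfold etaFactor; fun_prop

/-- Height differences are controlled by the Green potential of the gradient between the levels. -/
theorem ofReal_sub_le_lintegral_greenKernel (hu : ContDiff ℝ 1 u) (h0 : ∀ z, 1 ≤ ‖z‖ → u z = 0)
    {x : ℂ} (hx : ‖x‖ < 1) {s₁ s₂ : ℝ} (hs₁ : 0 ≤ s₁) (hs₂ : s₂ ≤ |u x|) :
    ENNReal.ofReal (s₂ - s₁) ≤ ∫⁻ y, ENNReal.ofReal (greenKernel ‖eta x y‖) *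
      {y | s₁ < |u y| ∧ |u y| < s₂}.indicator
        (fun y => ENNReal.ofReal ((1 - ‖y‖ ^ 2) * ‖fderiv ℝ u y‖)) y ∂hyperbolicMeasure := by
  have hx' : ‖-x‖ < 1 := by simpa using hx
  have hA := measurableSet_level hu.continuous s₁ s₂
  have hm (ζ : ℂ) : Measurable (eta ζ) := measurable_eta_uncurry.comp measurable_prodMk_left
  have hfd : Measurable (fun y => ‖fderiv ℝ u y‖) :=
    (hu.continuous_fderiv one_ne_zero).norm.measurable
  set A := {y | s₁ < |u y| ∧ |u y| < s₂}
  let G : ℂ → ℝ≥0∞ := fun z => ENNReal.ofReal ‖z‖⁻¹ *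
    (A.indicator (fun y => ENNReal.ofReal ‖fderiv ℝ u y‖) (eta (-x) z) *
        ENNReal.ofReal (etaFactor (-x) z))
  have hG : Measurable G :=
    measurable_norm.inv.ennreal_ofReal.mul (((hfd.ennreal_ofReal.indicator hA).comp (hm _)).mul
      (measurable_etaFactor _).ennreal_ofReal)
  have h1 : ENNReal.ofReal (2 * π) * ENNReal.ofReal (s₂ - s₁) ≤ ∫⁻ z in unitDisk, G z := by
    rw [lintegral_unitDisk_polar hG]
    have : ENNReal.ofReal (2 * π) * ENNReal.ofReal (s₂ - s₁) =
        ∫⁻ θ in Ioo (-π) π, ENNReal.ofReal (s₂ - s₁) := by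
      rw [lintegral_const, Measure.restrict_apply MeasurableSet.univ, univ_inter, Real.volume_Ioo,
        mul_comm]
      congr 2
      ring
    rw [this]
    refine lintegral_mono fun θ => ?_
    have hω := norm_cos_add_sin_mul_I θ
    refine (ofReal_sub_le_lintegral_ray hu h0 hx hs₁ hs₂ hω).trans_eq ?_
    refine setLIntegral_congr_fun measurableSet_Ioo fun r hr => ?_
    have hn : ‖(r * (Real.cos θ + Real.sin θ * Complex.I) : ℂ)‖ = r := by
      rw [norm_mul, hω, mul_one, Complex.norm_real, Real.norm_of_nonneg hr.1.le]
    simp only [G]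
    rw [hn, ← mul_assoc, ← ENNReal.ofReal_mul hr.1.le, mul_inv_cancel₀ hr.1.ne', ENNReal.ofReal_one,
      one_mul]
  have h2 : ∫⁻ z in unitDisk, G z = ENNReal.ofReal (2 * π) *
      ∫⁻ y, ENNReal.ofReal (greenKernel ‖eta x y‖) *
      A.indicator
        (fun y => ENNReal.ofReal ((1 - ‖y‖ ^ 2) * ‖fderiv ℝ u y‖)) y ∂hyperbolicMeasure := by
    have hmF : Measurable (fun y => ENNReal.ofReal (greenKernel ‖eta x y‖) *
        A.indicator (fun y => ENNReal.ofReal ((1 - ‖y‖ ^ 2) * ‖fderiv ℝ u y‖)) y) :=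
      ((measurable_greenKernel.comp (hm x).norm).ennreal_ofReal).mul
        (Measurable.indicator (by fun_prop) hA)
    rw [lintegral_hyperbolicMeasure hmF,
      ← lintegral_const_mul' _ _ ENNReal.ofReal_ne_top,
      lintegral_unitDisk_eta hx]
    refine setLIntegral_congr_fun measurableSet_unitDisk fun y hy => ?_
    have hy : ‖y‖ < 1 := hy
    have hη := norm_eta_lt_one hx hy
    have h2 : 0 < 1 - ‖y‖ ^ 2 := by nlinarith [norm_nonneg y]
    have hη2 : 0 < 1 - ‖eta x y‖ ^ 2 := by nlinarith [norm_nonneg (eta x y)]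
    simp only [G]
    rw [eta_neg_eta hx hy]
    by_cases hyA : y ∈ A
    · rw [indicator_of_mem hyA, indicator_of_mem hyA,
        ← ENNReal.ofReal_mul (norm_nonneg _), ← ENNReal.ofReal_mul (by positivity),
        ← ENNReal.ofReal_mul (by positivity),
        ← ENNReal.ofReal_mul (greenKernel_nonneg (norm_nonneg _) hη.le),
        ← ENNReal.ofReal_mul (by positivity), ← ENNReal.ofReal_mul (by positivity)]
      congr 1
      have e1 := etaFactor_neg_eta hx hy
      have e2 := etaFactor_eq hx hy
      calc etaFactor x y ^ 2 *
            (‖eta x y‖⁻¹ * (‖fderiv ℝ u y‖ * etaFactor (-x) (eta x y)))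
          = (etaFactor (-x) (eta x y) * etaFactor x y) * etaFactor x y *
              ‖eta x y‖⁻¹ * ‖fderiv ℝ u y‖ := by ring
        _ = _ := by
          rw [e1, e2]
          unfold greenKernel
          by_cases hz : ‖eta x y‖ = 0
          · simp [hz]
          · field_simp
    · simp [indicator_of_notMem hyA]
  rw [h2] at h1
  exact (ENNReal.mul_le_mul_iff_right (by positivity) ENNReal.ofReal_ne_top).mp h1

/-! ### The capacity estimate -/

theorem lintegral_mul_sq_le {Y : Type*} [MeasurableSpace Y] {β : Measure Y} {f g : Y → ℝ≥0∞}
    (hf : Measurable f) (hg : Measurable g) :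
    (∫⁻ y, f y * g y ∂β) ^ 2 ≤ (∫⁻ y, f y ^ 2 ∂β) * ∫⁻ y, g y ^ 2 ∂β := by
  have h := ENNReal.lintegral_mul_le_Lp_mul_Lq β Real.HolderConjugate.two_two
    hf.aemeasurable hg.aemeasurable
  simp only [Pi.mul_apply, ENNReal.rpow_two] at h
  calc _ ≤ ((∫⁻ y, f y ^ 2 ∂β) ^ (1 / 2 : ℝ) * (∫⁻ y, g y ^ 2 ∂β) ^ (1 / 2 : ℝ)) ^ 2 := by
        gcongr
    _ = _ := by
        rw [mul_pow, ← ENNReal.rpow_two, ← ENNReal.rpow_two, ← ENNReal.rpow_mul,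
          ← ENNReal.rpow_mul]
        norm_num

/-- An `L²` bound for the average of a kernel, split into a part that is integrable in each
variable and a bounded part that is square integrable in the second variable. -/
theorem sq_le_of_kernel_bounds {X Y : Type*} [MeasurableSpace X] [MeasurableSpace Y]
    {α : Measure X} {β : Measure Y} [SFinite α] [SFinite β] {κ₁ κ₂ : X → Y → ℝ≥0∞}
    (hκ₁ : Measurable (Function.uncurry κ₁)) (hκ₂ : Measurable (Function.uncurry κ₂))
    {f : Y → ℝ≥0∞} (hf : Measurable f) {δ a b Q : ℝ≥0∞}
    (hδ : ∀ᵐ x ∂α, δ ≤ ∫⁻ y, (κ₁ x y + κ₂ x y) * f y ∂β)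
    (ha : ∀ᵐ y ∂β, ∫⁻ x, κ₁ x y ∂α ≤ a) (ha' : ∀ᵐ x ∂α, ∫⁻ y, κ₁ x y ∂β ≤ a)
    (hb : ∀ᵐ y ∂β, ∀ᵐ x ∂α, κ₂ x y ≤ b) (hQ : ∀ᵐ x ∂α, ∫⁻ y, κ₂ x y ^ 2 ∂β ≤ Q) :
    (δ * α univ) ^ 2 ≤ (∫⁻ y, f y ^ 2 ∂β) *
      ((a + 2 * (b * α univ)) * (a * α univ) + α univ * (Q * α univ)) := by
  have hm₁ : Measurable fun y => ∫⁻ x, κ₁ x y ∂α := hκ₁.lintegral_prod_left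
  have hm₂ : Measurable fun y => ∫⁻ x, κ₂ x y ∂α := hκ₂.lintegral_prod_left
  have hκ₁y (y : Y) : Measurable fun x => κ₁ x y := hκ₁.comp measurable_prodMk_right
  have hκ₂y (y : Y) : Measurable fun x => κ₂ x y := hκ₂.comp measurable_prodMk_right
  set h₁ : Y → ℝ≥0∞ := fun y => ∫⁻ x, κ₁ x y ∂α with h₁_def
  set h₂ : Y → ℝ≥0∞ := fun y => ∫⁻ x, κ₂ x y ∂α with h₂_def
  have hI₁ : ∫⁻ y, h₁ y ∂β ≤ a * α univ := by
    rw [h₁_def, ← lintegral_lintegral_swap hκ₁.aemeasurable, ← lintegral_const]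
    exact lintegral_mono_ae ha'
  have hI₂ : ∫⁻ y, ∫⁻ x, κ₂ x y ^ 2 ∂α ∂β ≤ Q * α univ := by
    rw [← lintegral_lintegral_swap (f := fun x y => κ₂ x y ^ 2) (hκ₂.pow_const 2).aemeasurable,
      ← lintegral_const]
    exact lintegral_mono_ae hQ
  have hstep : δ * α univ ≤ ∫⁻ y, f y * (h₁ y + h₂ y) ∂β := by
    calc δ * α univ = ∫⁻ _, δ ∂α := (lintegral_const δ).symm
      _ ≤ ∫⁻ x, ∫⁻ y, (κ₁ x y + κ₂ x y) * f y ∂β ∂α := lintegral_mono_ae hδ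
      _ = ∫⁻ y, ∫⁻ x, (κ₁ x y + κ₂ x y) * f y ∂α ∂β :=
          lintegral_lintegral_swap
            ((hκ₁.add hκ₂).mul (hf.comp measurable_snd)).aemeasurable
      _ = _ := by
          refine lintegral_congr fun y => ?_
          rw [lintegral_mul_const (f := fun x => κ₁ x y + κ₂ x y) _ ((hκ₁y y).add (hκ₂y y)),
             lintegral_add_left (hκ₁y y), mul_comm]
  have hsq : ∫⁻ y, (h₁ y + h₂ y) ^ 2 ∂β ≤
      (a + 2 * (b * α univ)) * (a * α univ) + α univ * (Q * α univ) := by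
    calc ∫⁻ y, (h₁ y + h₂ y) ^ 2 ∂β
        ≤ ∫⁻ y, ((a + 2 * (b * α univ)) * h₁ y + α univ * ∫⁻ x, κ₂ x y ^ 2 ∂α) ∂β := by
          refine lintegral_mono_ae ?_
          filter_upwards [ha, hb] with y hya hyb
          have e1 : h₂ y ≤ b * α univ := by
            rw [← lintegral_const]
            exact lintegral_mono_ae hyb
          have e2 : h₂ y ^ 2 ≤ α univ * ∫⁻ x, κ₂ x y ^ 2 ∂α := by
            simpa using lintegral_mul_sq_le (β := α) (f := fun _ => 1) measurable_const (hκ₂y y)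
          calc (h₁ y + h₂ y) ^ 2 = (h₁ y + 2 * h₂ y) * h₁ y + h₂ y ^ 2 := by ring
            _ ≤ _ := by gcongr
      _ = (a + 2 * (b * α univ)) * ∫⁻ y, h₁ y ∂β +
            α univ * ∫⁻ y, ∫⁻ x, κ₂ x y ^ 2 ∂α ∂β := by
          rw [lintegral_add_left (hm₁.const_mul _), lintegral_const_mul _ hm₁,
            lintegral_const_mul _ (hκ₂.pow_const 2).lintegral_prod_left]
      _ ≤ _ := by gcongr
  calc (δ * α univ) ^ 2 ≤ (∫⁻ y, f y * (h₁ y + h₂ y) ∂β) ^ 2 := by gcongr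
    _ ≤ (∫⁻ y, f y ^ 2 ∂β) * ∫⁻ y, (h₁ y + h₂ y) ^ 2 ∂β :=
        lintegral_mul_sq_le hf (hm₁.add hm₂)
    _ ≤ _ := by gcongr

/-- Conformal invariance of the Dirichlet integral. -/
theorem lintegral_hyperbolic_gradient_sq_le (hu : ContDiff ℝ 1 u) {A : Set ℂ}
    (hA : MeasurableSet A) :
    ∫⁻ y in A, ENNReal.ofReal ((1 - ‖y‖ ^ 2) * ‖fderiv ℝ u y‖) ^ 2 ∂hyperbolicMeasure ≤
      ∫⁻ y in A, ENNReal.ofReal (‖fderiv ℝ u y‖ ^ 2) := by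
  have hfd : Measurable (fun y => ‖fderiv ℝ u y‖) :=
    (hu.continuous_fderiv one_ne_zero).norm.measurable
  rw [← lintegral_indicator hA, ← lintegral_indicator hA,
    lintegral_hyperbolicMeasure (Measurable.indicator (by fun_prop) hA)]
  refine (setLIntegral_mono' measurableSet_unitDisk fun y hy => ?_).trans
    (setLIntegral_le_lintegral unitDisk _)
  have hy : ‖y‖ < 1 := hy
  have h2 : 0 < 1 - ‖y‖ ^ 2 := by nlinarith [norm_nonneg y]
  by_cases hyA : y ∈ A
  · rw [indicator_of_mem hyA, indicator_of_mem hyA, ← ENNReal.ofReal_pow (by positivity),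
      ← ENNReal.ofReal_mul (by positivity)]
    refine ENNReal.ofReal_le_ofReal (le_of_eq ?_)
    field_simp
  · simp [indicator_of_notMem hyA]

theorem lintegral_greenKernel_far_sq_le {x : ℂ} (hx : ‖x‖ < 1) {A : Set ℂ} (hA : MeasurableSet A)
    (hAd : A ⊆ unitDisk) {r₀ r₁ : ℝ} (hr₀ : 0 < r₀) (hr₁ : r₀ ≤ r₁) :
    ∫⁻ y in A, (Ici r₀).indicator (fun r => ENNReal.ofReal (greenKernel r)) ‖eta x y‖ ^ 2
      ∂hyperbolicMeasure ≤ ENNReal.ofReal (1 / (2 * π) * Real.log (r₁ / r₀)) +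
        ENNReal.ofReal (greenKernel r₁ ^ 2) * hyperbolicMeasure A := by
  have hm : Measurable fun y => ‖eta x y‖ :=
    (measurable_eta_uncurry.comp measurable_prodMk_left).norm
  have hk : Measurable ((Ico r₀ r₁).indicator fun r => ENNReal.ofReal (greenKernel r ^ 2)) :=
    (measurable_greenKernel.pow_const 2).ennreal_ofReal.indicator measurableSet_Ico
  calc _ ≤ ∫⁻ y in A, ((Ico r₀ r₁).indicator (fun r => ENNReal.ofReal (greenKernel r ^ 2))
        ‖eta x y‖ + ENNReal.ofReal (greenKernel r₁ ^ 2)) ∂hyperbolicMeasure := by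
        refine setLIntegral_mono' hA fun y hy => ?_
        have h1 := norm_eta_lt_one hx (hAd hy)
        by_cases h0 : r₀ ≤ ‖eta x y‖
        · rw [indicator_of_mem (show _ ∈ Ici r₀ from h0)]
          rw [← ENNReal.ofReal_pow (greenKernel_nonneg (norm_nonneg _) h1.le)]
          by_cases h2 : ‖eta x y‖ < r₁
          · rw [indicator_of_mem (show _ ∈ Ico r₀ r₁ from ⟨h0, h2⟩)]
            exact le_self_add
          · refine le_add_left (ENNReal.ofReal_le_ofReal ?_)
            have := greenKernel_anti (hr₀.trans_le hr₁) (not_lt.mp h2) h1.le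
            have h3 := greenKernel_nonneg (norm_nonneg _) h1.le
            gcongr
        · rw [indicator_of_notMem (show _ ∉ Ici r₀ from h0)]
          simp
    _ = ∫⁻ y in A, (Ico r₀ r₁).indicator (fun r => ENNReal.ofReal (greenKernel r ^ 2))
        ‖eta x y‖ ∂hyperbolicMeasure +
          ENNReal.ofReal (greenKernel r₁ ^ 2) * hyperbolicMeasure A := by
        rw [lintegral_add_right _ measurable_const, setLIntegral_const]
    _ ≤ _ := by
        gcongr
        refine (setLIntegral_le_lintegral A _).trans ?_
        rw [lintegral_hyperbolicMeasure_eta hk hx]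
        exact lintegral_greenKernel_sq_annulus hr₀ hr₁

theorem subset_unitDisk_of_lt_abs (h0 : ∀ z, 1 ≤ ‖z‖ → u z = 0) {S : Set ℂ}
    (hS : ∀ y ∈ S, 0 < |u y|) : S ⊆ unitDisk := by
  intro y hy
  by_contra h
  have := hS y hy
  rw [h0 y (not_lt.mp h)] at this
  simp at this

/-- The Dirichlet energy between two levels controls the hyperbolic area of the upper level set. -/
theorem sq_sub_le_energy_mul_log (hu : ContDiff ℝ 1 u) (h0 : ∀ z, 1 ≤ ‖z‖ → u z = 0)
    {s₁ s₂ V r₁ q D : ℝ} (hs₁ : 0 ≤ s₁) (hs : s₁ < s₂) (hV0 : 0 < V) (hV1 : V ≤ 1)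
    (hV : hyperbolicMeasure {y | s₂ ≤ |u y|} = ENNReal.ofReal V) (hr₁ : √V / 2 ≤ r₁)
    (hq0 : 0 ≤ q) (hD0 : 0 ≤ D)
    (hq : ENNReal.ofReal (greenKernel r₁ ^ 2) *
      hyperbolicMeasure {y | s₁ < |u y| ∧ |u y| < s₂} ≤ ENNReal.ofReal q)
    (hD : ∫⁻ y in {y | s₁ < |u y| ∧ |u y| < s₂}, ENNReal.ofReal (‖fderiv ℝ u y‖ ^ 2) ≤
      ENNReal.ofReal D) :
    (s₂ - s₁) ^ 2 ≤ D * (1 / (2 * π) * Real.log (r₁ / (√V / 2)) + q + 1) := by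
  have hA := measurableSet_level hu.continuous s₁ s₂
  have hE : MeasurableSet {y | s₂ ≤ |u y|} :=
    (isClosed_le continuous_const hu.continuous.abs).measurableSet
  have hAd : {y | s₁ < |u y| ∧ |u y| < s₂} ⊆ unitDisk :=
    subset_unitDisk_of_lt_abs h0 fun y hy => hs₁.trans_lt hy.1
  have hEd : {y | s₂ ≤ |u y|} ⊆ unitDisk :=
    subset_unitDisk_of_lt_abs h0 fun y hy => (hs₁.trans_lt hs).trans_le hy
  have hfd : Measurable (fun y => ‖fderiv ℝ u y‖) :=
    (hu.continuous_fderiv one_ne_zero).norm.measurable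
  set A := {y | s₁ < |u y| ∧ |u y| < s₂} with A_def
  set E := {y | s₂ ≤ |u y|} with E_def
  set r₀ := √V / 2 with r₀_def
  have hVs : √V ^ 2 = V := Real.sq_sqrt hV0.le
  have hr₀ : 0 < r₀ := by positivity
  have hr₀V : r₀ ^ 2 = V / 4 := by rw [r₀_def, div_pow, hVs]; norm_num
  have hr₀' : r₀ ≤ 1 / 2 := by nlinarith
  have hπ := Real.pi_gt_three
  have hk := measurable_greenKernel.ennreal_ofReal
  have hη : Measurable fun p : ℂ × ℂ => ‖eta p.1 p.2‖ := measurable_eta_uncurry.norm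
  let κ₁ : ℂ → ℂ → ℝ≥0∞ := fun x y =>
    (Iio r₀).indicator (fun r => ENNReal.ofReal (greenKernel r)) ‖eta x y‖
  let κ₂ : ℂ → ℂ → ℝ≥0∞ := fun x y =>
    (Ici r₀).indicator (fun r => ENNReal.ofReal (greenKernel r)) ‖eta x y‖
  have hnear {x : ℂ} (hx : ‖x‖ < 1) (S : Set ℂ) :
      ∫⁻ y in S, κ₁ x y ∂hyperbolicMeasure ≤ ENNReal.ofReal (4 / 3 * r₀) := by
    refine (setLIntegral_le_lintegral S _).trans ?_
    simp only [κ₁]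
    rw [lintegral_hyperbolicMeasure_eta (hk.indicator measurableSet_Iio) hx]
    exact lintegral_greenKernel_near hr₀ hr₀'
  have hlog : 0 ≤ 1 / (2 * π) * Real.log (r₁ / r₀) :=
    mul_nonneg (by positivity) (Real.log_nonneg ((one_le_div hr₀).mpr hr₁))
  have main := sq_le_of_kernel_bounds (α := hyperbolicMeasure.restrict E)
    (β := hyperbolicMeasure.restrict A) (κ₁ := κ₁) (κ₂ := κ₂)
    (f := fun y => ENNReal.ofReal ((1 - ‖y‖ ^ 2) * ‖fderiv ℝ u y‖))
    (δ := ENNReal.ofReal (s₂ - s₁)) (a := ENNReal.ofReal (4 / 3 * r₀))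
    (b := ENNReal.ofReal (1 / (2 * π * r₀)))
    (Q := ENNReal.ofReal (1 / (2 * π) * Real.log (r₁ / r₀) + q))
    ((hk.indicator measurableSet_Iio).comp hη) ((hk.indicator measurableSet_Ici).comp hη)
    (by fun_prop) ?_ ?_ ?_ ?_ ?_
  · rw [Measure.restrict_apply_univ, hV] at main
    have hI := (lintegral_hyperbolic_gradient_sq_le hu hA).trans hD
    have main' := main.trans (mul_le_mul_left hI _)
    rw [← ENNReal.ofReal_mul (by linarith), ← ENNReal.ofReal_pow (by nlinarith),
      ← ENNReal.ofReal_mul (by positivity), ← ENNReal.ofReal_mul (by positivity),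
      ← ENNReal.ofReal_mul (by positivity), ← ENNReal.ofReal_mul (by positivity),
      ← ENNReal.ofReal_ofNat 2, ← ENNReal.ofReal_mul (by norm_num),
      ← ENNReal.ofReal_add (by positivity) (by positivity),
      ← ENNReal.ofReal_mul (by positivity), ← ENNReal.ofReal_add (by positivity) (by positivity),
      ← ENNReal.ofReal_mul hD0, ENNReal.ofReal_le_ofReal_iff (by positivity)] at main'
    have e1 : (4 / 3 * r₀ + 2 * (1 / (2 * π * r₀) * V)) * (4 / 3 * r₀ * V) =
        V ^ 2 * (4 / 9 + 4 / 3 / π) := by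
      have : V = 4 * r₀ ^ 2 := by linarith
      rw [this]
      field_simp
      ring
    have e2 : 4 / 3 / π ≤ 4 / 9 := by
      rw [div_le_div_iff₀ (by positivity) (by norm_num)]
      linarith
    rw [e1] at main'
    have hV2 : 0 < V ^ 2 := by positivity
    refine le_of_mul_le_mul_right ?_ hV2
    calc (s₂ - s₁) ^ 2 * V ^ 2 = ((s₂ - s₁) * V) ^ 2 := by ring
      _ ≤ _ := main'
      _ = D * (1 / (2 * π) * Real.log (r₁ / r₀) + q + (4 / 9 + 4 / 3 / π)) * V ^ 2 := by ring
      _ ≤ _ := by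
        gcongr
        linarith
  · filter_upwards [ae_restrict_mem hE] with x hx
    refine (ofReal_sub_le_lintegral_greenKernel hu h0 (hEd hx) hs₁ hx).trans_eq ?_
    rw [← lintegral_indicator hA]
    refine lintegral_congr fun y => ?_
    have : κ₁ x y + κ₂ x y = ENNReal.ofReal (greenKernel ‖eta x y‖) := by
      by_cases h : ‖eta x y‖ < r₀
      · simp only [κ₁, κ₂]
        rw [indicator_of_mem (show _ ∈ Iio r₀ from h),
          indicator_of_notMem (show _ ∉ Ici r₀ from not_le.mpr h), add_zero]
      · simp only [κ₁, κ₂]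
        rw [indicator_of_notMem (show _ ∉ Iio r₀ from h),
          indicator_of_mem (show _ ∈ Ici r₀ from not_lt.mp h), zero_add]
    by_cases hy : y ∈ A
    · rw [indicator_of_mem hy, indicator_of_mem hy, this]
    · rw [indicator_of_notMem hy, indicator_of_notMem hy, mul_zero]
  · filter_upwards [ae_restrict_mem hA] with y hy
    simp only [κ₁, norm_eta_comm _ y]
    exact hnear (hAd hy) E
  · filter_upwards [ae_restrict_mem hE] with x hx
    exact hnear (hEd hx) A
  · filter_upwards [ae_restrict_mem hA] with y hy
    filter_upwards [ae_restrict_mem hE] with x hx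
    refine indicator_apply_le' (fun hr => ?_) (fun _ => zero_le)
    have hr : r₀ ≤ ‖eta x y‖ := hr
    refine ENNReal.ofReal_le_ofReal ((greenKernel_le (hr₀.trans_le hr)).trans ?_)
    gcongr
  · filter_upwards [ae_restrict_mem hE] with x hx
    refine (lintegral_greenKernel_far_sq_le (hEd hx) hA hAd hr₀ hr₁).trans ?_
    rw [ENNReal.ofReal_add hlog hq0]
    gcongr

/-! ### The Hardy inequality on the disk -/

theorem contDiff_sq_mul_of_tsupport_subset (hu : ContDiff ℝ 1 u) (hs : tsupport u ⊆ unitDisk)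
    {ψ : ℂ → ℝ} (hψ : ∀ z, ‖z‖ < 1 → ContDiffAt ℝ 1 ψ z) :
    ContDiff ℝ 1 fun z => u z * (u z * ψ z) :=
  contDiff_iff_contDiffAt.2 fun z => by
    by_cases hz : z ∈ tsupport u
    · exact hu.contDiffAt.mul (hu.contDiffAt.mul (hψ z (hs hz)))
    · refine (contDiffAt_const (c := (0 : ℝ))).congr_of_eventuallyEq ?_
      filter_upwards [notMem_tsupport_iff_eventuallyEq.1 hz] with w hw
      simp [hw]

theorem integral_fderiv_self_apply {W : ℂ → ℝ} (hW : ContDiff ℝ 1 W) (hc : HasCompactSupport W) :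
    Integrable (fun z => fderiv ℝ W z z) ∧ ∫ z, fderiv ℝ W z z = -(2 * ∫ z, W z) := by
  have hcd : HasCompactSupport (fderiv ℝ W) := hc.fderiv ℝ
  have hfd := hW.continuous_fderiv one_ne_zero
  have hcv (v : ℂ) : HasCompactSupport fun z => fderiv ℝ W z v :=
    hcd.comp_left (g := fun L : ℂ →L[ℝ] ℝ => L v) (by simp)
  have hIW : Integrable W := hW.continuous.integrable_of_hasCompactSupport hc
  have part (l : ℂ →L[ℝ] ℝ) (v : ℂ) (hl : l v = 1) :
      Integrable (fun z => l z * fderiv ℝ W z v) ∧ ∫ z, l z * fderiv ℝ W z v = -∫ z, W z := by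
    have hI : Integrable (fun z => l z * fderiv ℝ W z v) :=
      (l.continuous.mul (hfd.clm_apply continuous_const)).integrable_of_hasCompactSupport
        (hcv v).mul_left
    refine ⟨hI, ?_⟩
    rw [integral_mul_fderiv_eq_neg_fderiv_mul_of_integrable (v := v) (f := fun z => l z) (g := W) _ hI
      ((l.continuous.mul hW.continuous).integrable_of_hasCompactSupport hc.mul_left)
      (fun z _ => l.differentiableAt) (fun z _ => hW.differentiable one_ne_zero z)]
    · simp [hl]
    · simpa [hl] using hIW
  obtain ⟨hI1, h1⟩ := part Complex.reCLM 1 (by simp)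
  obtain ⟨hI2, h2⟩ := part Complex.imCLM Complex.I (by simp)
  have hdecomp : (fun z => fderiv ℝ W z z) = fun z =>
      Complex.reCLM z * fderiv ℝ W z 1 + Complex.imCLM z * fderiv ℝ W z Complex.I := by
    ext z
    have : z = z.re • (1 : ℂ) + z.im • Complex.I := by
      simp
    conv_lhs => rw [this, map_add, map_smul, map_smul, ← this]
    simp
  rw [hdecomp]
  refine ⟨hI1.add hI2, ?_⟩
  rw [integral_add hI1 hI2, h1, h2]
  ring

theorem hardy_pointwise (hu : ContDiff ℝ 1 u) {z : ℂ} (hz : ‖z‖ < 1) :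
    u z * (u z * ((1 - ‖z‖ ^ 2) ^ 2)⁻¹) - ‖fderiv ℝ u z‖ ^ 2 ≤
      2 * (u z * (u z * (1 - ‖z‖ ^ 2)⁻¹)) +
        fderiv ℝ (fun z => u z * (u z * (1 - ‖z‖ ^ 2)⁻¹)) z z := by
  have h2 : 0 < 1 - ‖z‖ ^ 2 := by nlinarith [norm_nonneg z]
  have hd1 := (hu.differentiable one_ne_zero z).hasFDerivAt
  have hd2 : HasFDerivAt (fun z : ℂ => 1 - ‖z‖ ^ 2) (-(2 • innerSL ℝ z)) z :=
    (hasStrictFDerivAt_norm_sq z).hasFDerivAt.const_sub 1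
  have hd3 := (hasDerivAt_inv h2.ne').comp_hasFDerivAt z hd2
  have hd4 := (hd1.mul (hd1.mul hd3)).fderiv
  have hd5 : fderiv ℝ (fun z => u z * (u z * (1 - ‖z‖ ^ 2)⁻¹)) z = _ := hd4
  have hop : |fderiv ℝ u z z| ≤ ‖fderiv ℝ u z‖ := by
    refine ((fderiv ℝ u z).le_opNorm z).trans ?_
    exact mul_le_of_le_one_right (norm_nonneg _) hz.le
  have hval : fderiv ℝ (fun z => u z * (u z * (1 - ‖z‖ ^ 2)⁻¹)) z z =
      2 * (u z * (1 - ‖z‖ ^ 2)⁻¹) * fderiv ℝ u z z +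
        2 * (u z * (1 - ‖z‖ ^ 2)⁻¹) ^ 2 * ‖z‖ ^ 2 := by
    rw [hd5]
    simp [← inv_pow]
    ring
  rw [hval, ← inv_pow]
  have hX := sq_le_sq' (abs_le.mp hop).1 (abs_le.mp hop).2
  generalize fderiv ℝ u z z = X at hX ⊢
  have e1 : (1 - ‖z‖ ^ 2) * (1 - ‖z‖ ^ 2)⁻¹ = 1 := mul_inv_cancel₀ h2.ne'
  have e2 : 2 * (u z * (u z * (1 - ‖z‖ ^ 2)⁻¹)) =
      2 * (u z * (1 - ‖z‖ ^ 2)⁻¹) ^ 2 * (1 - ‖z‖ ^ 2) := by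
    linear_combination -(2 * (u z) ^ 2 * (1 - ‖z‖ ^ 2)⁻¹) * e1
  rw [e2]
  nlinarith [sq_nonneg (u z * (1 - ‖z‖ ^ 2)⁻¹ + X)]

theorem lintegral_sq_hyperbolicMeasure_le (hu : ContDiff ℝ 1 u) (hc : HasCompactSupport u)
    (hs : tsupport u ⊆ unitDisk) :
    ∫⁻ z, ENNReal.ofReal (u z ^ 2) ∂hyperbolicMeasure ≤
      ENNReal.ofReal (∫ z, ‖fderiv ℝ u z‖ ^ 2) := by
  have hpos {z : ℂ} (hz : ‖z‖ < 1) : 0 < 1 - ‖z‖ ^ 2 := by nlinarith [norm_nonneg z]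
  have hsq (z : ℂ) : ContDiffAt ℝ 1 (fun z : ℂ => 1 - ‖z‖ ^ 2) z :=
    contDiffAt_const.sub (contDiff_norm_sq ℝ).contDiffAt
  have hψ₁ (z : ℂ) (hz : ‖z‖ < 1) : ContDiffAt ℝ 1 (fun z : ℂ => (1 - ‖z‖ ^ 2)⁻¹) z :=
    (hsq z).inv (hpos hz).ne'
  have hψ₂ (z : ℂ) (hz : ‖z‖ < 1) : ContDiffAt ℝ 1 (fun z : ℂ => ((1 - ‖z‖ ^ 2) ^ 2)⁻¹) z :=
    ((hsq z).pow 2).inv (pow_pos (hpos hz) 2).ne'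
  have hH := contDiff_sq_mul_of_tsupport_subset hu hs hψ₂
  have hW := contDiff_sq_mul_of_tsupport_subset hu hs hψ₁
  have hIH : Integrable fun z => u z * (u z * ((1 - ‖z‖ ^ 2) ^ 2)⁻¹) :=
    hH.continuous.integrable_of_hasCompactSupport hc.mul_right
  have hcW : HasCompactSupport fun z => u z * (u z * (1 - ‖z‖ ^ 2)⁻¹) := hc.mul_right
  have hIW : Integrable fun z => u z * (u z * (1 - ‖z‖ ^ 2)⁻¹) :=
    hW.continuous.integrable_of_hasCompactSupport hcW
  have hcf : HasCompactSupport fun z => ‖fderiv ℝ u z‖ ^ 2 :=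
    (hc.fderiv ℝ).mono fun z hz hz0 => hz (by simp [hz0])
  have hIf : Integrable fun z => ‖fderiv ℝ u z‖ ^ 2 :=
    ((hu.continuous_fderiv one_ne_zero).norm.pow 2).integrable_of_hasCompactSupport hcf
  obtain ⟨hIW', hW'⟩ := integral_fderiv_self_apply hW hcW
  have hpt (z : ℂ) : u z * (u z * ((1 - ‖z‖ ^ 2) ^ 2)⁻¹) - ‖fderiv ℝ u z‖ ^ 2 ≤
      2 * (u z * (u z * (1 - ‖z‖ ^ 2)⁻¹)) +
        fderiv ℝ (fun z => u z * (u z * (1 - ‖z‖ ^ 2)⁻¹)) z z := by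
    by_cases hz : z ∈ tsupport u
    · exact hardy_pointwise hu (hs hz)
    · have hW0 : fderiv ℝ (fun z => u z * (u z * (1 - ‖z‖ ^ 2)⁻¹)) z = 0 :=
        image_eq_zero_of_notMem_tsupport fun h =>
          hz (tsupport_mul_subset_left (tsupport_fderiv_subset ℝ h))
      simp [hW0, image_eq_zero_of_notMem_tsupport hz]
  have hint := integral_mono (hIH.sub hIf) ((hIW.const_mul 2).add hIW') hpt
  simp only [Pi.sub_apply, Pi.add_apply] at hint
  rw [integral_sub hIH hIf, integral_add (hIW.const_mul 2) hIW', hW', integral_const_mul] at hint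
  have hH0 (z : ℂ) : 0 ≤ u z * (u z * ((1 - ‖z‖ ^ 2) ^ 2)⁻¹) := by
    rw [← mul_assoc]
    exact mul_nonneg (mul_self_nonneg _) (inv_nonneg.2 (sq_nonneg _))
  calc ∫⁻ z, ENNReal.ofReal (u z ^ 2) ∂hyperbolicMeasure
      = ∫⁻ z in unitDisk, ENNReal.ofReal ((1 - ‖z‖ ^ 2) ^ 2)⁻¹ * ENNReal.ofReal (u z ^ 2) :=
        lintegral_hyperbolicMeasure (hu.continuous.pow 2).measurable.ennreal_ofReal
    _ ≤ ∫⁻ z, ENNReal.ofReal ((1 - ‖z‖ ^ 2) ^ 2)⁻¹ * ENNReal.ofReal (u z ^ 2) :=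
        setLIntegral_le_lintegral _ _
    _ = ∫⁻ z, ENNReal.ofReal (u z * (u z * ((1 - ‖z‖ ^ 2) ^ 2)⁻¹)) := by
        refine lintegral_congr fun z => ?_
        rw [← ENNReal.ofReal_mul (inv_nonneg.2 (sq_nonneg _))]
        congr 1
        ring
    _ = ENNReal.ofReal (∫ z, u z * (u z * ((1 - ‖z‖ ^ 2) ^ 2)⁻¹)) :=
        (ofReal_integral_eq_lintegral_ofReal hIH (Eventually.of_forall hH0)).symm
    _ ≤ _ := ENNReal.ofReal_le_ofReal (by linarith)

/-! ### From level-set decay to exponential integrability -/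

theorem level_gap_bound {σ₁ σ₂ D w₁ w₂ C l : ℝ} (hC : 0 ≤ C) (h1 : 1 ≤ σ₁) (h12 : σ₁ ≤ σ₂)
    (hD0 : 0 ≤ D) (hD1 : D ≤ 1) (hbase : σ₁ ^ 2 ≤ D * (w₁ + C))
    (hinc : (σ₂ - σ₁) ^ 2 ≤ (1 - D) * (w₂ - w₁ + C))
    (hw₁ : w₁ ≤ σ₁ ^ 2 + l) (hw₂ : w₂ ≤ σ₂ ^ 2 + l) :
    0 ≤ l + 2 * C ∧ σ₂ ^ 2 - σ₁ ^ 2 ≤ 6 * (l + 2 * C) + 9 * (l + 2 * C) ^ 2 := by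
  obtain ⟨d, rfl⟩ : ∃ d, σ₂ = σ₁ + d := ⟨σ₂ - σ₁, by ring⟩
  have hd : 0 ≤ d := by linarith
  have hpos : 0 < w₁ + C := by
    by_contra! h
    nlinarith [mul_nonneg hD0 (neg_nonneg.2 h)]
  have hle : σ₁ ^ 2 ≤ w₁ + C := hbase.trans (mul_le_of_le_one_left hpos.le hD1)
  have hL : 0 ≤ l + C := by linarith
  have hDm : (1 - D) * (σ₁ ^ 2 + l + C) ≤ l + C := by
    have := mul_le_mul_of_nonneg_left (by linarith : w₁ + C ≤ σ₁ ^ 2 + l + C) hD0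
    linarith
  have hincr : w₂ - w₁ + C ≤ d ^ 2 + 2 * d * σ₁ + (l + 2 * C) := by nlinarith
  set L := l + 2 * C with L_def
  have hL0 : 0 ≤ L := by linarith
  have hdm : d ^ 2 * (σ₁ ^ 2 + l + C) ≤ (l + C) * (d ^ 2 + 2 * d * σ₁ + L) := by
    have hq : 0 ≤ d ^ 2 + 2 * d * σ₁ + L := by positivity
    have hm : 0 ≤ σ₁ ^ 2 + l + C := by nlinarith [sq_nonneg σ₁]
    have i1 : d ^ 2 ≤ (1 - D) * (d ^ 2 + 2 * d * σ₁ + L) := by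
      have := mul_le_mul_of_nonneg_left hincr (sub_nonneg.2 hD1)
      have e : σ₁ + d - σ₁ = d := by ring
      rw [e] at hinc
      linarith
    have := mul_le_mul_of_nonneg_right i1 hm
    have := mul_le_mul_of_nonneg_right hDm hq
    linarith
  have hx : (d * σ₁) ^ 2 ≤ 2 * L * (d * σ₁) + L ^ 2 := by
    have hs : 0 ≤ 2 * (d * σ₁) + L := by positivity
    have := mul_le_mul_of_nonneg_right (by linarith : l + C ≤ L) hs
    nlinarith
  have hx3 : d * σ₁ ≤ 3 * L := by
    by_contra! h
    nlinarith
  have hd3 : d ≤ 3 * L := (le_mul_of_one_le_right hd h1).trans hx3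
  refine ⟨hL0, ?_⟩
  nlinarith

theorem one_add_sq_le_exp_of_gap {g L : ℝ} (hL : 0 ≤ L) (hg0 : 0 ≤ g) (hg : g ≤ 6 * L + 9 * L ^ 2) :
    (1 + g) ^ 2 ≤ 12 ^ 4 * Real.exp L := by
  have h1 : 1 + 3 * L ≤ 12 * Real.exp (L / 4) := by
    nlinarith [Real.add_one_le_exp (L / 4)]
  have h2 : 1 + g ≤ (1 + 3 * L) ^ 2 := by nlinarith
  calc (1 + g) ^ 2 ≤ ((1 + 3 * L) ^ 2) ^ 2 := by gcongr
    _ = (1 + 3 * L) ^ 4 := by ring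
    _ ≤ (12 * Real.exp (L / 4)) ^ 4 := by gcongr
    _ = 12 ^ 4 * Real.exp L := by
      rw [mul_pow, ← Real.exp_nat_mul]
      congr 2
      push_cast
      ring

theorem summable_inv_one_add_abs_sq : Summable fun j : ℤ => 1 / (1 + |(j : ℝ)|) ^ 2 := by
  have h : Summable fun n : ℕ => 1 / (1 + (n : ℝ)) ^ 2 := by
    have := (summable_nat_add_iff 1).2 (Real.summable_one_div_nat_pow.2 one_lt_two)
    refine this.congr fun n => ?_
    push_cast
    rw [add_comm]
  refine Summable.of_nat_of_neg ?_ ?_ <;> simpa using h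

theorem sum_le_of_decay_from_max {N : ℕ → ℝ} {B : ℝ} (hB : 0 ≤ B) {S : Finset ℕ}
    (hN : ∀ n ∈ S, ∀ m ∈ S, N n ≤ N m → N n * (1 + |(n : ℝ) - m|) ^ 2 ≤ B) :
    ∑ n ∈ S, N n ≤ B * ∑' j : ℤ, 1 / (1 + |(j : ℝ)|) ^ 2 := by
  have hK : 0 ≤ ∑' j : ℤ, 1 / (1 + |(j : ℝ)|) ^ 2 := tsum_nonneg fun j => by positivity
  rcases S.eq_empty_or_nonempty with rfl | hS
  · simpa using mul_nonneg hB hK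
  obtain ⟨m, hm, hmax⟩ := S.exists_max_image N hS
  have hinj : Set.InjOn (fun n : ℕ => (n : ℤ) - m) S := fun a _ b _ h => by
    simp only at h
    omega
  calc ∑ n ∈ S, N n ≤ ∑ n ∈ S, B * (1 / (1 + |(((n : ℤ) - m : ℤ) : ℝ)|) ^ 2) := by
        refine Finset.sum_le_sum fun n hn => ?_
        have := hN n hn m hm (hmax n hn)
        rw [mul_one_div, le_div_iff₀ (by positivity)]
        push_cast
        exact this
    _ = B * ∑ j ∈ S.image (fun n : ℕ => (n : ℤ) - m), 1 / (1 + |(j : ℝ)|) ^ 2 := by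
        rw [Finset.sum_image hinj, Finset.mul_sum]
    _ ≤ _ := mul_le_mul_of_nonneg_left
        (summable_inv_one_add_abs_sq.sum_le_tsum _ fun j _ => by positivity) hB

theorem sq_le_energy_mul_log (hu : ContDiff ℝ 1 u) (h0 : ∀ z, 1 ≤ ‖z‖ → u z = 0)
    {s V D : ℝ} (hs : 0 < s) (hV0 : 0 < V) (hV1 : V ≤ 1)
    (hV : hyperbolicMeasure {y | s ≤ |u y|} = ENNReal.ofReal V) (hD0 : 0 ≤ D)
    (hD : ∫⁻ y in {y | 0 < |u y| ∧ |u y| < s}, ENNReal.ofReal (‖fderiv ℝ u y‖ ^ 2) ≤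
      ENNReal.ofReal D) :
    4 * π * s ^ 2 ≤ D * (-Real.log V + 26) := by
  have hsq : √V ≤ 1 := Real.sqrt_le_one.2 hV1
  have key := sq_sub_le_energy_mul_log hu h0 (r₁ := 1) le_rfl hs hV0 hV1 hV (by linarith) le_rfl hD0
    (by simp [greenKernel]) hD
  rw [Real.log_div one_ne_zero (by positivity), Real.log_div (by positivity) two_ne_zero,
    Real.log_sqrt hV0.le, Real.log_one] at key
  have hπ := Real.pi_pos
  have hb : 2 * Real.log 2 + 4 * π ≤ 26 := by
    linarith [Real.log_two_lt_d9, Real.pi_lt_four]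
  calc 4 * π * s ^ 2 = 4 * π * (s - 0) ^ 2 := by ring
    _ ≤ 4 * π * (D * (1 / (2 * π) * (0 - (Real.log V / 2 - Real.log 2)) + 0 + 1)) := by gcongr
    _ = D * (-Real.log V + (2 * Real.log 2 + 4 * π)) := by
      field_simp
      ring
    _ ≤ _ := by gcongr

theorem sq_sub_le_energy_mul_log_sub (hu : ContDiff ℝ 1 u) (h0 : ∀ z, 1 ≤ ‖z‖ → u z = 0)
    {s₁ s₂ V₁ V₂ D : ℝ} (hs₁ : 0 ≤ s₁) (hs : s₁ < s₂) (hV₂ : 0 < V₂) (hV : V₂ ≤ V₁) (hV₁ : V₁ ≤ 1)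
    (hE₁ : hyperbolicMeasure {y | s₁ ≤ |u y|} = ENNReal.ofReal V₁)
    (hE₂ : hyperbolicMeasure {y | s₂ ≤ |u y|} = ENNReal.ofReal V₂) (hD0 : 0 ≤ D)
    (hD : ∫⁻ y in {y | s₁ < |u y| ∧ |u y| < s₂}, ENNReal.ofReal (‖fderiv ℝ u y‖ ^ 2) ≤
      ENNReal.ofReal D) :
    4 * π * (s₂ - s₁) ^ 2 ≤ D * (-Real.log V₂ - -Real.log V₁ + 26) := by
  have hV₁0 : 0 < V₁ := hV₂.trans_le hV
  have hπ := Real.pi_pos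
  have hq : ENNReal.ofReal (greenKernel (√V₁ / 2) ^ 2) *
      hyperbolicMeasure {y | s₁ < |u y| ∧ |u y| < s₂} ≤ ENNReal.ofReal 1 := by
    have hk : greenKernel (√V₁ / 2) ^ 2 ≤ (1 / (2 * π * (√V₁ / 2))) ^ 2 :=
      pow_le_pow_left₀ (greenKernel_nonneg (by positivity)
      (by linarith [Real.sqrt_le_one.2 hV₁])) (greenKernel_le (by positivity)) 2
    have hm : hyperbolicMeasure {y | s₁ < |u y| ∧ |u y| < s₂} ≤ ENNReal.ofReal V₁ :=
      hE₁ ▸ measure_mono fun y hy => hy.1.le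
    refine (mul_le_mul' (ENNReal.ofReal_le_ofReal hk) hm).trans ?_
    rw [← ENNReal.ofReal_mul (sq_nonneg _)]
    refine ENNReal.ofReal_le_ofReal ?_
    have he : (1 / (2 * π * (√V₁ / 2))) ^ 2 * V₁ = 1 / π ^ 2 := by
      have := Real.sq_sqrt hV₁0.le
      field_simp
      linarith
    rw [he, div_le_one (by positivity)]
    nlinarith [Real.pi_gt_three]
  have key := sq_sub_le_energy_mul_log hu h0 hs₁ hs hV₂ (hV.trans hV₁) hE₂
    (r₁ := √V₁ / 2) (by gcongr) zero_le_one hD0 hq hD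
  rw [Real.log_div (by positivity) (by positivity), Real.log_div (by positivity) two_ne_zero,
    Real.log_div (by positivity) two_ne_zero, Real.log_sqrt hV₁0.le, Real.log_sqrt hV₂.le] at key
  calc 4 * π * (s₂ - s₁) ^ 2 ≤ 4 * π * (D * (1 / (2 * π) *
        (Real.log V₁ / 2 - Real.log 2 - (Real.log V₂ / 2 - Real.log 2)) + 1 + 1)) := by gcongr
    _ = D * (-Real.log V₂ - -Real.log V₁ + 8 * π) := by
      field_simp
      ring
    _ ≤ _ := by
      gcongr
      linarith [Real.pi_lt_d2]

/-- The level at which `4 * π * u ^ 2` reaches `n`. -/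
def expLevel (n : ℕ) : ℝ := √n / (2 * √π)

theorem four_pi_mul_expLevel_sub_sq (n m : ℕ) :
    4 * π * (expLevel m - expLevel n) ^ 2 = (√(m : ℝ) - √n) ^ 2 := by
  have := Real.sq_sqrt Real.pi_pos.le
  have hπ : 0 < √π := Real.sqrt_pos.2 Real.pi_pos
  unfold expLevel
  field_simp
  linear_combination (-4 * (√(m : ℝ) - √n) ^ 2) * this

theorem four_pi_mul_expLevel_sq (n : ℕ) : 4 * π * expLevel n ^ 2 = n := by
  simpa [expLevel] using four_pi_mul_expLevel_sub_sq 0 n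

theorem expLevel_mono {n m : ℕ} (h : n ≤ m) : expLevel n ≤ expLevel m := by
  unfold expLevel
  gcongr

theorem expLevel_lt {n m : ℕ} (h : n < m) : expLevel n < expLevel m := by
  unfold expLevel
  have hπ : 0 < √π := Real.sqrt_pos.2 Real.pi_pos
  gcongr

theorem expLevel_pos {n : ℕ} (h : 0 < n) : 0 < expLevel n := by
  simpa [expLevel] using expLevel_lt h

theorem level_index_gap (hu : ContDiff ℝ 1 u) (h0 : ∀ z, 1 ≤ ‖z‖ → u z = 0)
    (hE : ∫⁻ y, ENNReal.ofReal (‖fderiv ℝ u y‖ ^ 2) ≤ 1)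
    {a b : ℕ} (ha : 1 ≤ a) (hab : a ≤ b) {Va Vb l : ℝ} (hVb : 0 < Vb) (hVa : Va ≤ 1)
    (hEa : hyperbolicMeasure {y | expLevel a ≤ |u y|} = ENNReal.ofReal Va)
    (hEb : hyperbolicMeasure {y | expLevel b ≤ |u y|} = ENNReal.ofReal Vb)
    (hwa : -Real.log Va ≤ a + l) (hwb : -Real.log Vb ≤ b + l) :
    0 ≤ l + 2 * 26 ∧ (b : ℝ) - a ≤ 6 * (l + 2 * 26) + 9 * (l + 2 * 26) ^ 2 := by
  have hVab : Vb ≤ Va := by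
    have : ENNReal.ofReal Vb ≤ ENNReal.ofReal Va := by
      rw [← hEa, ← hEb]
      exact measure_mono fun y hy => (expLevel_mono hab).trans hy
    by_contra! h
    exact absurd this (not_le.2 ((ENNReal.ofReal_lt_ofReal_iff hVb).2 h))
  set F : Set ℂ → ℝ≥0∞ := fun S => ∫⁻ y in S, ENNReal.ofReal (‖fderiv ℝ u y‖ ^ 2) with hF
  set A := {y | 0 < |u y| ∧ |u y| < expLevel a} with hA
  set A' := {y | expLevel a < |u y| ∧ |u y| < expLevel b} with hA'
  have hF1 : F A ≤ 1 := (setLIntegral_le_lintegral _ _).trans hE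
  have hFtop : F A ≠ ⊤ := ne_top_of_le_ne_top ENNReal.one_ne_top hF1
  have hdisj : Disjoint A A' := Set.disjoint_left.2 fun y hy hy' => hy.2.not_gt hy'.1
  have hsum : F A + F A' ≤ 1 := by
    rw [hF]
    simp only
    rw [← lintegral_union (measurableSet_level hu.continuous _ _) hdisj]
    exact (setLIntegral_le_lintegral _ _).trans hE
  have hD1 : (F A).toReal ≤ 1 := by
    simpa using ENNReal.toReal_mono ENNReal.one_ne_top hF1
  have hFA' : F A' ≤ ENNReal.ofReal (1 - (F A).toReal) := by
    rw [ENNReal.ofReal_sub _ ENNReal.toReal_nonneg, ENNReal.ofReal_toReal hFtop, ENNReal.ofReal_one]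
    exact ENNReal.le_sub_of_add_le_left hFtop hsum
  have h1a : (1 : ℝ) ≤ a := by exact_mod_cast ha
  have hbase := sq_le_energy_mul_log hu h0 (expLevel_pos ha) (hVb.trans_le hVab) hVa hEa
    ENNReal.toReal_nonneg (ENNReal.ofReal_toReal hFtop).ge
  have hinc : (√(b : ℝ) - √a) ^ 2 ≤
      (1 - (F A).toReal) * (-Real.log Vb - -Real.log Va + 26) := by
    rcases hab.eq_or_lt with rfl | hlt
    · have : Vb = Va := by
        have := hEa.symm.trans hEb
        exact ((ENNReal.ofReal_eq_ofReal_iff (hVb.trans_le hVab).le hVb.le).1 this).symm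
      subst this
      have : 0 ≤ 1 - (F A).toReal := sub_nonneg.2 hD1
      simpa only [sub_self, zero_pow two_ne_zero, zero_add] using mul_nonneg this (by norm_num)
    · rw [← four_pi_mul_expLevel_sub_sq]
      exact sq_sub_le_energy_mul_log_sub hu h0 (expLevel_pos ha).le (expLevel_lt hlt) hVb hVab hVa
        hEa hEb (sub_nonneg.2 hD1) hFA'
  have sa := Real.sq_sqrt (Nat.cast_nonneg (α := ℝ) a)
  have sb := Real.sq_sqrt (Nat.cast_nonneg (α := ℝ) b)
  have := level_gap_bound (σ₁ := √a) (σ₂ := √b) (by norm_num) (Real.one_le_sqrt.2 h1a)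
    (by gcongr) ENNReal.toReal_nonneg hD1
    (by rw [sa, ← four_pi_mul_expLevel_sq]; exact hbase) hinc (sa.symm ▸ hwa) (sb.symm ▸ hwb)
  rwa [sa, sb] at this

theorem exp_mul_level_decay (hu : ContDiff ℝ 1 u) (h0 : ∀ z, 1 ≤ ‖z‖ → u z = 0)
    (hE : ∫⁻ y, ENNReal.ofReal (‖fderiv ℝ u y‖ ^ 2) ≤ 1) {V : ℕ → ℝ}
    (hV : ∀ n, 13 ≤ n → 0 ≤ V n ∧ V n ≤ 1 ∧
      hyperbolicMeasure {y | expLevel n ≤ |u y|} = ENNReal.ofReal (V n))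
    {n m : ℕ} (hn : 13 ≤ n) (hm : 13 ≤ m)
    (hnm : Real.exp n * V n ≤ Real.exp m * V m) :
    Real.exp n * V n * (1 + |(n : ℝ) - m|) ^ 2 ≤ 12 ^ 4 * Real.exp (2 * 26) := by
  obtain ⟨hn0, hn1, hEn⟩ := hV n hn
  obtain ⟨hm0, hm1, hEm⟩ := hV m hm
  rcases hn0.eq_or_lt with hz | hnpos
  · rw [← hz]
    simp only [mul_zero, zero_mul]
    positivity
  have hmpos : 0 < V m := by
    by_contra! h
    have := mul_pos (Real.exp_pos n) hnpos
    nlinarith [Real.exp_pos m]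
  have hlog : (n : ℝ) + Real.log (V n) ≤ m + Real.log (V m) := by
    have := Real.log_le_log (by positivity) hnm
    rwa [Real.log_mul (Real.exp_pos _).ne' hnpos.ne', Real.log_mul (Real.exp_pos _).ne' hmpos.ne',
      Real.log_exp, Real.log_exp] at this
  have hgap : 0 ≤ (-Real.log (V n) - n) + 2 * 26 ∧ |(n : ℝ) - m| ≤
      6 * ((-Real.log (V n) - n) + 2 * 26) + 9 * ((-Real.log (V n) - n) + 2 * 26) ^ 2 := by
    rcases le_total n m with h | h
    · have := level_index_gap hu h0 hE (l := -Real.log (V n) - n) (by lia) h hmpos hn1 hEn hEm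
        (by linarith) (by linarith)
      rwa [abs_sub_comm, abs_of_nonneg (sub_nonneg.2 (by exact_mod_cast h))]
    · have := level_index_gap hu h0 hE (l := -Real.log (V n) - n) (by lia) h hnpos hm1 hEm hEn
        (by linarith) (by linarith)
      rwa [abs_of_nonneg (sub_nonneg.2 (by exact_mod_cast h))]
  calc Real.exp n * V n * (1 + |(n : ℝ) - m|) ^ 2
      ≤ Real.exp n * V n * (12 ^ 4 * Real.exp ((-Real.log (V n) - n) + 2 * 26)) := by
        gcongr
        exact one_add_sq_le_exp_of_gap hgap.1 (abs_nonneg _) hgap.2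
    _ = 12 ^ 4 * Real.exp (2 * 26) := by
        rw [Real.exp_add, Real.exp_sub, Real.exp_neg, Real.exp_log hnpos]
        field_simp

theorem expLevel_le_iff {n : ℕ} {x : ℝ} : expLevel n ≤ |x| ↔ (n : ℝ) ≤ 4 * π * x ^ 2 := by
  rw [← four_pi_mul_expLevel_sq, mul_le_mul_iff_right₀ (by positivity), ← sq_abs x,
    sq_le_sq₀ (by unfold expLevel; positivity) (abs_nonneg x)]

theorem hyperbolicMeasure_level_le_one (hu : Continuous u)
    (hH : ∫⁻ y, ENNReal.ofReal (u y ^ 2) ∂hyperbolicMeasure ≤ 1) {n : ℕ} (hn : 13 ≤ n) :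
    hyperbolicMeasure {y | expLevel n ≤ |u y|} ≤ 1 := by
  have hmeas : Measurable fun y => ENNReal.ofReal (u y ^ 2) :=
    (hu.pow 2).measurable.ennreal_ofReal
  have h1 : (1 : ℝ≥0∞) ≤ ENNReal.ofReal (expLevel n ^ 2) := by
    rw [← ENNReal.ofReal_one]
    refine ENNReal.ofReal_le_ofReal ?_
    have h := four_pi_mul_expLevel_sq n
    have hn' : (13 : ℝ) ≤ n := by exact_mod_cast hn
    by_contra! hlt
    nlinarith [Real.pi_pos, Real.pi_lt_d2]
  calc hyperbolicMeasure {y | expLevel n ≤ |u y|}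
      ≤ hyperbolicMeasure {y | 1 ≤ ENNReal.ofReal (u y ^ 2)} := by
        refine measure_mono fun y hy => h1.trans (ENNReal.ofReal_le_ofReal ?_)
        rw [← sq_abs (u y)]
        exact pow_le_pow_left₀ (by unfold expLevel; positivity) hy 2
    _ ≤ ∫⁻ y, ENNReal.ofReal (u y ^ 2) ∂hyperbolicMeasure := by
        simpa using mul_meas_ge_le_lintegral hmeas 1
    _ ≤ 1 := hH

theorem exp_sub_one_le_sum {t : ℝ} (ht : 0 ≤ t) {M : ℕ} (hM : t < M) :
    ENNReal.ofReal (Real.exp t - 1) ≤ ENNReal.ofReal (Real.exp 13 * t) +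
      ∑ n ∈ Finset.Ico 13 M, ENNReal.ofReal (Real.exp (n + 1)) * if (n : ℝ) ≤ t then 1 else 0 := by
  rcases lt_or_ge t 13 with h | h
  · refine le_add_right (ENNReal.ofReal_le_ofReal ?_)
    have h1 : Real.exp t * (1 - t) ≤ 1 := by
      calc Real.exp t * (1 - t) ≤ Real.exp t * Real.exp (-t) := by
            gcongr
            linarith [Real.add_one_le_exp (-t)]
        _ = 1 := by rw [← Real.exp_add, add_neg_cancel, Real.exp_zero]
    have h2 : Real.exp t * t ≤ Real.exp 13 * t := by gcongr
    linarith
  · have hf := Nat.floor_le ht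
    have hmem : ⌊t⌋₊ ∈ Finset.Ico 13 M :=
      Finset.mem_Ico.2 ⟨Nat.le_floor (by exact_mod_cast h), (Nat.floor_lt ht).2 hM⟩
    refine le_add_left (le_trans ?_ (Finset.single_le_sum
      (f := fun n : ℕ => ENNReal.ofReal (Real.exp (n + 1)) * if (n : ℝ) ≤ t then 1 else 0)
      (fun _ _ => zero_le) hmem))
    simp only [hf, if_true, mul_one]
    refine ENNReal.ofReal_le_ofReal ?_
    linarith [Real.exp_le_exp.2 (Nat.lt_floor_add_one t).le]

/-- The constant bounding the Trudinger–Moser functional. -/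
def trudingerMoserConst : ℝ :=
  4 * π * Real.exp 13 +
    Real.exp 1 * (12 ^ 4 * Real.exp (2 * 26) * ∑' j : ℤ, 1 / (1 + |(j : ℝ)|) ^ 2)

theorem trudingerMoserConst_nonneg : 0 ≤ trudingerMoserConst := by
  have : 0 ≤ ∑' j : ℤ, 1 / (1 + |(j : ℝ)|) ^ 2 := tsum_nonneg fun j => by positivity
  unfold trudingerMoserConst
  positivity

theorem lintegral_exp_sub_one_le (hu : ContDiff ℝ 1 u) (hc : HasCompactSupport u)
    (hs : tsupport u ⊆ unitDisk) (hE : ∫ z, ‖fderiv ℝ u z‖ ^ 2 ≤ 1) :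
    ∫⁻ z, ENNReal.ofReal (Real.exp (4 * π * u z ^ 2) - 1) ∂hyperbolicMeasure ≤
      ENNReal.ofReal trudingerMoserConst := by
  have h0 (z : ℂ) (hz : 1 ≤ ‖z‖) : u z = 0 :=
    image_eq_zero_of_notMem_tsupport fun h => hz.not_gt (hs h)
  have hcf : HasCompactSupport fun z => ‖fderiv ℝ u z‖ ^ 2 :=
    (hc.fderiv ℝ).mono fun z hz hz0 => hz (by simp [hz0])
  have hIf : Integrable fun z => ‖fderiv ℝ u z‖ ^ 2 :=
    ((hu.continuous_fderiv one_ne_zero).norm.pow 2).integrable_of_hasCompactSupport hcf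
  have hE1 : ENNReal.ofReal (∫ z, ‖fderiv ℝ u z‖ ^ 2) ≤ 1 := by
    simpa using ENNReal.ofReal_le_ofReal hE
  have hElint : ∫⁻ z, ENNReal.ofReal (‖fderiv ℝ u z‖ ^ 2) ≤ 1 := by
    rw [← ofReal_integral_eq_lintegral_ofReal hIf (Eventually.of_forall fun z => sq_nonneg _)]
    exact hE1
  have hH := (lintegral_sq_hyperbolicMeasure_le hu hc hs).trans hE1
  set V : ℕ → ℝ := fun n => (hyperbolicMeasure {y | expLevel n ≤ |u y|}).toReal with V_def
  have hV (n : ℕ) (hn : 13 ≤ n) : 0 ≤ V n ∧ V n ≤ 1 ∧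
      hyperbolicMeasure {y | expLevel n ≤ |u y|} = ENNReal.ofReal (V n) := by
    have h1 := hyperbolicMeasure_level_le_one hu.continuous hH hn
    exact ⟨ENNReal.toReal_nonneg, by simpa using ENNReal.toReal_mono ENNReal.one_ne_top h1,
      (ENNReal.ofReal_toReal (ne_top_of_le_ne_top ENNReal.one_ne_top h1)).symm⟩
  obtain ⟨K, hK⟩ := hu.continuous.bounded_above_of_compact_support hc
  obtain ⟨M, hM⟩ := exists_nat_gt (4 * π * K ^ 2)
  have hlt (z : ℂ) : 4 * π * u z ^ 2 < M := by
    refine lt_of_le_of_lt ?_ hM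
    rw [← sq_abs (u z)]
    have := hK z
    rw [Real.norm_eq_abs] at this
    gcongr
  have hmeas (n : ℕ) : MeasurableSet {y | expLevel n ≤ |u y|} :=
    measurableSet_le measurable_const hu.continuous.abs.measurable
  have hu2 : Measurable fun z => ENNReal.ofReal (u z ^ 2) :=
    (hu.continuous.pow 2).measurable.ennreal_ofReal
  have hdecay := sum_le_of_decay_from_max (N := fun n => Real.exp n * V n)
    (B := 12 ^ 4 * Real.exp (2 * 26)) (by positivity) (S := Finset.Ico 13 M)
    fun n hn m hm hnm => exp_mul_level_decay hu h0 hElint hV (Finset.mem_Ico.1 hn).1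
      (Finset.mem_Ico.1 hm).1 hnm
  calc ∫⁻ z, ENNReal.ofReal (Real.exp (4 * π * u z ^ 2) - 1) ∂hyperbolicMeasure
      ≤ ∫⁻ z, (ENNReal.ofReal (4 * π * Real.exp 13) * ENNReal.ofReal (u z ^ 2) +
          ∑ n ∈ Finset.Ico 13 M, ENNReal.ofReal (Real.exp (n + 1)) *
            {y | expLevel n ≤ |u y|}.indicator 1 z) ∂hyperbolicMeasure := by
        refine lintegral_mono fun z => ?_
        refine (exp_sub_one_le_sum (by positivity) (hlt z)).trans_eq ?_
        rw [← ENNReal.ofReal_mul (by positivity)]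
        congr 1
        · congr 1
          ring
        · simp [Set.indicator_apply, expLevel_le_iff]
    _ = ENNReal.ofReal (4 * π * Real.exp 13) * (∫⁻ z, ENNReal.ofReal (u z ^ 2) ∂hyperbolicMeasure) +
          ∑ n ∈ Finset.Ico 13 M, ENNReal.ofReal (Real.exp (n + 1)) *
            hyperbolicMeasure {y | expLevel n ≤ |u y|} := by
        rw [lintegral_add_left (hu2.const_mul _), lintegral_const_mul _ hu2,
          lintegral_finsetSum _ fun n _ => (measurable_one.indicator (hmeas n)).const_mul _]
        congr 1
        refine Finset.sum_congr rfl fun n _ => ?_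
        rw [lintegral_const_mul _ (measurable_one.indicator (hmeas n)),
          lintegral_indicator_one (hmeas n)]
    _ ≤ ENNReal.ofReal (4 * π * Real.exp 13) * 1 +
          ∑ n ∈ Finset.Ico 13 M, ENNReal.ofReal (Real.exp 1 * (Real.exp n * V n)) := by
        gcongr with n hn
        rw [(hV n (Finset.mem_Ico.1 hn).1).2.2, ← ENNReal.ofReal_mul (Real.exp_pos _).le,
          Real.exp_add, mul_comm (Real.exp n), mul_assoc]
    _ = ENNReal.ofReal (4 * π * Real.exp 13 +
          Real.exp 1 * ∑ n ∈ Finset.Ico 13 M, Real.exp n * V n) := by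
        have hpos (n : ℕ) : 0 ≤ Real.exp 1 * (Real.exp n * V n) := by
          have : 0 ≤ V n := ENNReal.toReal_nonneg
          positivity
        rw [mul_one, Finset.mul_sum, ENNReal.ofReal_add (by positivity)
          (Finset.sum_nonneg fun n _ => hpos n), ENNReal.ofReal_sum_of_nonneg fun n _ => hpos n]
    _ ≤ _ := by
        refine ENNReal.ofReal_le_ofReal ?_
        unfold trudingerMoserConst
        gcongr

theorem norm_gradient_eq (f : ℂ → ℝ) (x : ℂ) : ‖gradient f x‖ = ‖fderiv ℝ f x‖ :=
  (InnerProductSpace.toDual ℝ ℂ).symm.norm_map _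

end LevelSets

/-- Möbius-invariant Trudinger–Moser inequality (Mancini–Sandeep):
`∫_B (e^{4π u²} - 1) dx/(1-|x|²)²` is uniformly bounded over the unit ball of the
gradient norm in `H₀¹(B)`. -/
theorem invariant_trudinger_moser :
    ∃ C : ℝ, ∀ u : ℂ → ℝ, ContDiff ℝ (⊤ : ℕ∞) u → HasCompactSupport u → tsupport u ⊆ unitDisk →
      (∫ x in unitDisk, ‖gradient u x‖ ^ 2) ≤ 1 →
      (∫ x in unitDisk, (Real.exp (4 * π * (u x) ^ 2) - 1) / (1 - ‖x‖ ^ 2) ^ 2) ≤ C := by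
  refine ⟨trudingerMoserConst, fun u hu hc hs hE => ?_⟩
  have hu1 : ContDiff ℝ 1 u := hu.of_le (by exact_mod_cast le_top)
  have hE' : ∫ z, ‖fderiv ℝ u z‖ ^ 2 ≤ 1 := by
    rw [← setIntegral_eq_integral_of_forall_compl_eq_zero (s := unitDisk) fun z hz => ?_]
    · simpa only [norm_gradient_eq] using hE
    · have : fderiv ℝ u z = 0 :=
        image_eq_zero_of_notMem_tsupport fun h => hz (hs (tsupport_fderiv_subset ℝ h))
      simp [this]
  have hcont := hu1.continuous
  have hexp (z : ℂ) : 0 ≤ Real.exp (4 * π * u z ^ 2) - 1 :=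
    sub_nonneg.2 (Real.one_le_exp (by positivity))
  have hmeas : Measurable fun z => Real.exp (4 * π * u z ^ 2) - 1 := by fun_prop
  have hmeas' : Measurable fun z => (Real.exp (4 * π * u z ^ 2) - 1) / (1 - ‖z‖ ^ 2) ^ 2 := by
    fun_prop
  rw [integral_eq_lintegral_of_nonneg_ae
    (Eventually.of_forall fun z => div_nonneg (hexp z) (sq_nonneg _)) hmeas'.aestronglyMeasurable]
  refine ENNReal.toReal_le_of_le_ofReal trudingerMoserConst_nonneg ?_
  refine le_trans (le_of_eq ?_) (lintegral_exp_sub_one_le hu1 hc hs hE')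
  rw [lintegral_hyperbolicMeasure hmeas.ennreal_ofReal]
  refine lintegral_congr fun z => ?_
  rw [← ENNReal.ofReal_mul (inv_nonneg.2 (sq_nonneg _)), div_eq_inv_mul]
end
end

section
/- The constant 4π in the Möbius-invariant Trudinger-Moser inequality is optimal: for every p > 4π, sup over u ∈ H_0^1(B) with ‖∇u‖_2 ≤ 1 of ∫_B (e^{p u²} - 1) dx/(1-|x|²)² is infinite. -/
open MeasureTheory Real Filter Set Metric
open scoped Topology RealInnerProductSpace ENNReal

noncomputable section

/-- A smooth approximation of the positive part: `t * exp (-1 / t)` for `t > 0`, and `0` otherwise. -/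
def smoothPosPart (t : ℝ) : ℝ := t * expNegInvGlue t

lemma contDiff_smoothPosPart {n : ℕ∞} : ContDiff ℝ n smoothPosPart :=
  contDiff_id.mul expNegInvGlue.contDiff

lemma smoothPosPart_of_nonpos {t : ℝ} (ht : t ≤ 0) : smoothPosPart t = 0 := by
  simp [smoothPosPart, expNegInvGlue.zero_of_nonpos ht]

lemma smoothPosPart_of_pos {t : ℝ} (ht : 0 < t) : smoothPosPart t = t * exp (-t⁻¹) := by
  simp [smoothPosPart, expNegInvGlue, not_le.2 ht]

lemma smoothPosPart_nonneg (t : ℝ) : 0 ≤ smoothPosPart t := by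
  rcases le_or_gt t 0 with ht | ht
  · rw [smoothPosPart_of_nonpos ht]
  · rw [smoothPosPart_of_pos ht]; positivity

lemma sub_one_le_smoothPosPart (t : ℝ) : t - 1 ≤ smoothPosPart t := by
  rcases le_or_gt t 0 with ht | ht
  · rw [smoothPosPart_of_nonpos ht]; linarith
  · rw [smoothPosPart_of_pos ht]
    have h := mul_le_mul_of_nonneg_left (add_one_le_exp (-t⁻¹)) ht.le
    have h' : t * (-t⁻¹ + 1) = t - 1 := by field_simp; ring
    linarith

lemma abs_deriv_smoothPosPart_le (t : ℝ) : |deriv smoothPosPart t| ≤ 1 := by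
  rcases le_or_gt t 0 with ht | ht
  · have hmin : IsLocalMin smoothPosPart t :=
      Eventually.of_forall fun s => by
        rw [smoothPosPart_of_nonpos ht]; exact smoothPosPart_nonneg s
    simp [hmin.deriv_eq_zero]
  · have heq : smoothPosPart =ᶠ[𝓝 t] fun s => s * exp (-s⁻¹) := by
      filter_upwards [lt_mem_nhds ht] with s hs using smoothPosPart_of_pos hs
    have hd : HasDerivAt (fun s : ℝ => s * exp (-s⁻¹))
        (1 * exp (-t⁻¹) + t * (exp (-t⁻¹) * -(-(t ^ 2)⁻¹))) t :=
      (hasDerivAt_id t).mul (hasDerivAt_inv ht.ne').neg.exp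
    rw [heq.deriv_eq, hd.deriv]
    have hval : 1 * exp (-t⁻¹) + t * (exp (-t⁻¹) * -(-(t ^ 2)⁻¹))
        = (t⁻¹ + 1) * exp (-t⁻¹) := by field_simp; ring
    rw [hval, abs_of_nonneg (by positivity)]
    calc (t⁻¹ + 1) * exp (-t⁻¹) ≤ exp t⁻¹ * exp (-t⁻¹) := by
          gcongr; exact add_one_le_exp _
      _ = 1 := by rw [← exp_add]; simp

/-- A smooth truncated logarithm on `ℂ`, at height `log (1 / δ)` near the origin. -/
def truncatedLog (δ : ℝ) (z : ℂ) : ℝ := smoothPosPart (-log (‖z‖ ^ 2 + δ) - 1)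

lemma contDiff_truncatedLog {δ : ℝ} (hδ : 0 < δ) {n : ℕ∞} : ContDiff ℝ n (truncatedLog δ) := by
  refine contDiff_smoothPosPart.comp (ContDiff.sub (ContDiff.neg (ContDiff.log ?_ ?_))
    contDiff_const)
  · exact (contDiff_norm_sq ℝ).add contDiff_const
  · intro z; positivity

lemma truncatedLog_eq_zero {δ : ℝ} (hδ : 0 < δ) {z : ℂ} (hz : exp (-1) ≤ ‖z‖ ^ 2) :
    truncatedLog δ z = 0 := by
  apply smoothPosPart_of_nonpos
  have : -1 ≤ log (‖z‖ ^ 2 + δ) := (le_log_iff_exp_le (by positivity)).2 (by linarith)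
  linarith

lemma tsupport_truncatedLog_subset {δ : ℝ} (hδ : 0 < δ) :
    tsupport (truncatedLog δ) ⊆ closedBall 0 (exp (-1 / 2)) := by
  refine closure_minimal (fun z hz => ?_) isClosed_closedBall
  rw [mem_closedBall_zero_iff]
  by_contra! h
  refine hz (truncatedLog_eq_zero hδ ?_)
  calc exp (-1) = exp (-1 / 2) ^ 2 := by rw [← exp_nat_mul]; norm_num
    _ ≤ ‖z‖ ^ 2 := by gcongr

lemma norm_fderiv_truncatedLog_sq_le {δ : ℝ} (hδ : 0 < δ) (z : ℂ) :
    ‖fderiv ℝ (truncatedLog δ) z‖ ^ 2 ≤ 4 / (‖z‖ ^ 2 + δ) := by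
  have hpos : 0 < ‖z‖ ^ 2 + δ := by positivity
  have hg : HasFDerivAt (fun w : ℂ => -log (‖w‖ ^ 2 + δ) - 1)
      (-((‖z‖ ^ 2 + δ)⁻¹ • (2 • innerSL ℝ z))) z :=
    ((((hasStrictFDerivAt_norm_sq z).hasFDerivAt.add_const δ).log hpos.ne').neg).sub_const 1
  have hs : HasDerivAt smoothPosPart (deriv smoothPosPart (-log (‖z‖ ^ 2 + δ) - 1))
      (-log (‖z‖ ^ 2 + δ) - 1) :=
    ((contDiff_smoothPosPart (n := 1)).differentiable (by norm_num) _).hasDerivAt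
  have hc : fderiv ℝ (truncatedLog δ) z = _ := (hs.comp_hasFDerivAt z hg).fderiv
  have hle : ‖fderiv ℝ (truncatedLog δ) z‖ ≤ (‖z‖ ^ 2 + δ)⁻¹ * (2 * ‖z‖) := by
    rw [hc, norm_smul, norm_neg, norm_smul, norm_eq_abs, norm_eq_abs, abs_of_pos (inv_pos.2 hpos),
      ← Nat.cast_smul_eq_nsmul ℝ, norm_smul, innerSL_apply_norm]
    calc _ ≤ 1 * ((‖z‖ ^ 2 + δ)⁻¹ * (‖((2 : ℕ) : ℝ)‖ * ‖z‖)) := by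
          gcongr; exact abs_deriv_smoothPosPart_le _
      _ = _ := by norm_num
  calc ‖fderiv ℝ (truncatedLog δ) z‖ ^ 2 ≤ ((‖z‖ ^ 2 + δ)⁻¹ * (2 * ‖z‖)) ^ 2 := by gcongr
    _ = 4 * ‖z‖ ^ 2 / (‖z‖ ^ 2 + δ) ^ 2 := by field_simp; ring
    _ ≤ 4 / (‖z‖ ^ 2 + δ) := by
      rw [div_le_div_iff₀ (by positivity) hpos]
      nlinarith [mul_pos hpos hδ]

lemma unitDisk_eq_ball : unitDisk = ball 0 1 := by
  ext z; simp [unitDisk]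

lemma norm_gradient_eq_s8 (u : ℂ → ℝ) (z : ℂ) : ‖gradient u z‖ = ‖fderiv ℝ u z‖ := by
  simp [gradient]

lemma integral_unitDisk_inv_norm_sq_add {δ : ℝ} (hδ : 0 < δ) :
    ∫ z in unitDisk, 4 / (‖z‖ ^ 2 + δ) = 4 * π * (log (1 + δ) - log δ) := by
  have hind : ∫ z in unitDisk, 4 / (‖z‖ ^ 2 + δ)
      = ∫ z : ℂ, (Iio (1 : ℝ)).indicator (fun y => 4 / (y ^ 2 + δ)) ‖z‖ := by
    rw [unitDisk_eq_ball, ← integral_indicator measurableSet_ball]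
    refine integral_congr_ae (Eventually.of_forall fun z => ?_)
    simp [indicator]
  have hvol : (volume : Measure ℂ).real (ball 0 1) = π := by
    simp [Measure.real, Complex.volume_ball]
  have hset : ∫ y in Ioi (0 : ℝ), y ^ (Module.finrank ℝ ℂ - 1) •
      (Iio (1 : ℝ)).indicator (fun y => 4 / (y ^ 2 + δ)) y
      = ∫ y in (0 : ℝ)..1, 4 * y / (y ^ 2 + δ) := by
    rw [intervalIntegral.integral_of_le zero_le_one, integral_Ioc_eq_integral_Ioo,
      ← Ioi_inter_Iio, ← setIntegral_indicator measurableSet_Iio]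
    refine integral_congr_ae (Eventually.of_forall fun y => ?_)
    by_cases hy : y < 1
    · simp [indicator, hy]; ring
    · simp [indicator, hy]
  have hftc : ∫ y in (0 : ℝ)..1, 4 * y / (y ^ 2 + δ)
      = 2 * log (1 ^ 2 + δ) - 2 * log (0 ^ 2 + δ) := by
    refine intervalIntegral.integral_eq_sub_of_hasDerivAt
      (f := fun y => 2 * log (y ^ 2 + δ)) (fun y _ => ?_) ?_
    · have h : HasDerivAt (fun y : ℝ => y ^ 2 + δ) (2 * y) y := by
        simpa using (hasDerivAt_pow 2 y).add_const δ
      have hpos : y ^ 2 + δ ≠ 0 := by positivity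
      exact ((h.log hpos).const_mul 2).congr_deriv (by ring)
    · refine Continuous.intervalIntegrable ?_ _ _
      exact (by fun_prop : Continuous fun y : ℝ => 4 * y).div (by fun_prop)
        fun y => by positivity
  rw [hind, integral_fun_norm_addHaar, hset, hftc, hvol, Complex.finrank_real_complex]
  simp only [nsmul_eq_mul, smul_eq_mul]
  norm_num
  ring

lemma integral_norm_gradient_sq_truncatedLog_le {δ : ℝ} (hδ : 0 < δ) (c : ℝ) :
    ∫ z in unitDisk, ‖gradient (fun w => c * truncatedLog δ w) z‖ ^ 2
      ≤ c ^ 2 * (4 * π * (log (1 + δ) - log δ)) := by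
  rw [← integral_unitDisk_inv_norm_sq_add hδ, ← integral_const_mul]
  refine integral_mono_of_nonneg (Eventually.of_forall fun z => by positivity) ?_
    (Eventually.of_forall fun z => ?_)
  · have hcont : Continuous fun z : ℂ => c ^ 2 * (4 / (‖z‖ ^ 2 + δ)) :=
      continuous_const.mul (continuous_const.div (by fun_prop) fun z => by positivity)
    rw [unitDisk_eq_ball]
    exact (hcont.continuousOn.integrableOn_compact (isCompact_closedBall 0 1)).mono_set
      ball_subset_closedBall
  · have hd : DifferentiableAt ℝ (truncatedLog δ) z :=
      (contDiff_truncatedLog hδ (n := 1)).differentiable (by norm_num) z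
    simp only [norm_gradient_eq_s8]
    rw [fderiv_const_mul hd, norm_smul, mul_pow, norm_eq_abs, sq_abs]
    gcongr
    exact norm_fderiv_truncatedLog_sq_le hδ z

lemma sub_three_le_truncatedLog {L : ℝ} {z : ℂ} (hz : ‖z‖ < exp (-L / 2)) :
    L - 3 ≤ truncatedLog (exp (-L)) z := by
  have hsq : ‖z‖ ^ 2 ≤ exp (-L) := by
    calc ‖z‖ ^ 2 ≤ exp (-L / 2) ^ 2 := by gcongr
      _ = exp (-L) := by rw [← exp_nat_mul]; congr 1; push_cast; ring
  have hlog : log (‖z‖ ^ 2 + exp (-L)) ≤ 1 - L := by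
    rw [log_le_iff_le_exp (by positivity), sub_eq_add_neg, exp_add]
    nlinarith [exp_pos (-L), add_one_le_exp (1 : ℝ)]
  have h := sub_one_le_smoothPosPart (-log (‖z‖ ^ 2 + exp (-L)) - 1)
  unfold truncatedLog
  linarith

lemma integrableOn_unitDisk_of_eq_zero {u : ℂ → ℝ} (hu : Continuous u) {r : ℝ} (hr : r < 1)
    (h0 : ∀ z, z ∉ closedBall (0 : ℂ) r → u z = 0) (p : ℝ) :
    IntegrableOn (fun z => (exp (p * u z ^ 2) - 1) / (1 - ‖z‖ ^ 2) ^ 2) unitDisk := by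
  have hcont : ContinuousOn (fun z => (exp (p * u z ^ 2) - 1) / (1 - ‖z‖ ^ 2) ^ 2)
      (closedBall (0 : ℂ) r) := by
    refine ContinuousOn.div (by fun_prop) (by fun_prop) fun z hz => ?_
    rw [mem_closedBall_zero_iff] at hz
    have : ‖z‖ ^ 2 < 1 := by nlinarith [norm_nonneg z]
    exact pow_ne_zero 2 (by linarith)
  refine (hcont.integrableOn_compact (isCompact_closedBall 0 r)).of_forall_sdiff_eq_zero
    (unitDisk_eq_ball ▸ measurableSet_ball) fun z hz => ?_
  simp [h0 z hz.2]

lemma mul_volume_ball_le_integral {u : ℂ → ℝ} {p m s : ℝ} (hp : 0 ≤ p) (hs : 0 ≤ s) (hs1 : s ≤ 1)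
    (hint : IntegrableOn (fun z => (exp (p * u z ^ 2) - 1) / (1 - ‖z‖ ^ 2) ^ 2) unitDisk)
    (hm : ∀ z, ‖z‖ < s → m ≤ u z ^ 2) :
    (exp (p * m) - 1) * (π * s ^ 2)
      ≤ ∫ z in unitDisk, (exp (p * u z ^ 2) - 1) / (1 - ‖z‖ ^ 2) ^ 2 := by
  have hnum (z : ℂ) : 0 ≤ exp (p * u z ^ 2) - 1 := by
    rw [sub_nonneg, one_le_exp_iff]; positivity
  have hsub : ball (0 : ℂ) s ⊆ unitDisk := unitDisk_eq_ball ▸ ball_subset_ball hs1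
  have hvol : (volume : Measure ℂ).real (ball 0 s) = π * s ^ 2 := by
    simp [Measure.real, Complex.volume_ball, ENNReal.toReal_ofReal hs, mul_comm]
  calc (exp (p * m) - 1) * (π * s ^ 2)
      = ∫ _ in ball (0 : ℂ) s, (exp (p * m) - 1) := by
        rw [setIntegral_const, hvol, smul_eq_mul, mul_comm]
    _ ≤ ∫ z in ball (0 : ℂ) s, (exp (p * u z ^ 2) - 1) / (1 - ‖z‖ ^ 2) ^ 2 := by
        refine setIntegral_mono_on (integrableOn_const measure_ball_lt_top.ne)
          (hint.mono_set hsub) measurableSet_ball fun z hz => ?_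
        rw [mem_ball_zero_iff] at hz
        have hz1 : ‖z‖ ^ 2 < 1 := by nlinarith [norm_nonneg z]
        calc exp (p * m) - 1 ≤ exp (p * u z ^ 2) - 1 := by gcongr; exact hm z hz
          _ ≤ _ := le_div_self (hnum z) (pow_pos (by linarith) 2)
              (pow_le_one₀ (by linarith) (by linarith [sq_nonneg ‖z‖]))
    _ ≤ _ := setIntegral_mono_set hint
        (Eventually.of_forall fun z => div_nonneg (hnum z) (sq_nonneg _))
        hsub.eventuallyLE

/-- The constant `4π` in the Möbius-invariant Trudinger–Moser inequality is optimal: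
for every `p > 4π` the corresponding supremum is infinite. -/
theorem invariant_trudinger_moser_optimal (p : ℝ) (hp : 4 * π < p) :
    ∀ C : ℝ, ∃ u : ℂ → ℝ, ContDiff ℝ (⊤ : ℕ∞) u ∧ HasCompactSupport u ∧
      tsupport u ⊆ unitDisk ∧ (∫ x in unitDisk, ‖gradient u x‖ ^ 2) ≤ 1 ∧
      C < ∫ x in unitDisk, (Real.exp (p * (u x) ^ 2) - 1) / (1 - ‖x‖ ^ 2) ^ 2 := by
  intro C
  have hπ : 0 < 4 * π := by positivity
  obtain ⟨q, rfl⟩ : ∃ q, p = 4 * π * q := ⟨p / (4 * π), by field_simp⟩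
  have hq : 1 < q := by
    by_contra! h
    nlinarith
  obtain ⟨L, hL3, hLC⟩ : ∃ L : ℝ, 3 ≤ L ∧ C / π + 7 * q < (q - 1) * L := by
    refine ⟨max 3 ((C / π + 7 * q) / (q - 1) + 1), le_max_left _ _, ?_⟩
    have h := le_max_right 3 ((C / π + 7 * q) / (q - 1) + 1)
    rw [← div_lt_iff₀' (by linarith)]
    linarith
  set c : ℝ := (√(4 * π * (L + 1)))⁻¹ with hc
  have hc2 : c ^ 2 = (4 * π * (L + 1))⁻¹ := by
    rw [hc, inv_pow, sq_sqrt (by nlinarith)]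
  have hδ := exp_pos (-L)
  have hδ1 : exp (-L) ≤ 1 := exp_le_one_iff.2 (by linarith)
  have hr : exp (-1 / 2) < 1 := exp_lt_one_iff.2 (by norm_num)
  have hts : tsupport (fun z => c * truncatedLog (exp (-L)) z) ⊆ closedBall 0 (exp (-1 / 2)) :=
    (tsupport_mul_subset_right (f := fun _ => c)).trans (tsupport_truncatedLog_subset hδ)
  have h0 (z : ℂ) (hz : z ∉ closedBall (0 : ℂ) (exp (-1 / 2))) :
      c * truncatedLog (exp (-L)) z = 0 :=
    image_eq_zero_of_notMem_tsupport (f := fun w => c * truncatedLog (exp (-L)) w)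
      fun h => hz (hts h)
  have hcd {n : ℕ∞} : ContDiff ℝ n fun z => c * truncatedLog (exp (-L)) z :=
    contDiff_const.mul (contDiff_truncatedLog hδ)
  refine ⟨fun z => c * truncatedLog (exp (-L)) z, hcd,
    (isCompact_closedBall 0 _).of_isClosed_subset (isClosed_tsupport _) hts,
    hts.trans (unitDisk_eq_ball ▸ closedBall_subset_ball hr), ?_, ?_⟩
  · refine (integral_norm_gradient_sq_truncatedLog_le hδ c).trans ?_
    rw [hc2, log_exp, inv_mul_le_iff₀ (by nlinarith), mul_one]
    have := log_le_sub_one_of_pos (by positivity : 0 < 1 + exp (-L))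
    gcongr
    linarith
  · have hint := integrableOn_unitDisk_of_eq_zero (hcd (n := 0)).continuous hr
      h0 (4 * π * q)
    have hle := mul_volume_ball_le_integral (m := (L - 7) / (4 * π)) (s := exp (-L / 2))
      (by positivity) (by positivity) (exp_le_one_iff.2 (by linarith)) hint fun z hz => by
        have h := sub_three_le_truncatedLog hz
        rw [mul_pow, hc2, inv_mul_eq_div, div_le_div_iff₀ hπ (by nlinarith)]
        have h2 : (L - 3) ^ 2 ≤ truncatedLog (exp (-L)) z ^ 2 := by gcongr
        nlinarith
    refine lt_of_lt_of_le ?_ hle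
    have hexp : 4 * π * q * ((L - 7) / (4 * π)) = q * (L - 7) := by field_simp
    have hsq : exp (-L / 2) ^ 2 = exp (-L) := by
      rw [← exp_nat_mul]; congr 1; push_cast; ring
    have hprod : (exp (q * (L - 7)) - 1) * exp (-L) = exp ((q - 1) * L - 7 * q) - exp (-L) := by
      rw [sub_mul, ← exp_add, one_mul]; congr 2; ring
    have hgrow := add_one_le_exp ((q - 1) * L - 7 * q)
    calc C = π * (C / π) := by field_simp
      _ < π * (exp ((q - 1) * L - 7 * q) - exp (-L)) := by gcongr; linarith
      _ = _ := by rw [hexp, hsq, ← hprod]; ring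
end
end
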